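/- Fix an integer k ≥ 4. Then as x → ∞, the number of integers n with 1 ≤ n ≤ x such that there exists a prime p with p^k > (log log x)^{0.9} and p^k ∣ s(n) is o(x). (That is, almost always s(n) is not divisible by p^k for any prime p with p^k > (log log x)^{0.9}.) -/

import Mathlib

open scoped Classical
open Filter Finset

/-- `sigma1 n` is `σ(n)`, the sum of all positive divisors of `n`. -/
def sigma1 (n : ℕ) : ℕ := ArithmeticFunction.sigma 1 n

/-- `s n` is the sum of the proper divisors of `n`, i.e. `σ(n) − n`. -/
def s (n : ℕ) : ℕ := sigma1 n - n

/-!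
If `P` is a prime not dividing `m`, then `s (P * m) = P * s m + σ m`, so for fixed `m` the
condition `p ^ 4 ∣ s (P * m)` confines `P` to one residue class modulo a power of `p`. Similarly,
if `e` is odd, squarefree and coprime to `m`, then for fixed `m` the condition
`p ^ 4 ∣ σ e * σ m - e * m` pins down `σ e / e` modulo `p ^ 4`, hence `σ e / e` itself when `e` is
a little smaller than `p ^ 2`, and this fraction determines `e`. Summing over the cofactor `m`,
either factorization shows that few `n ≤ N` satisfy `p ^ 4 ∣ s n`.

All but `ε * N` of the integers `n ≤ N` have a suitable factorization for every prime `p` beyond a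
constant `ξ`. For `p ≤ log N` there is a prime `P ∣ n` in `[p ^ 2, exp √p]`: by the Turán–Kubilius
inequality the integers without one form a summable family as `p` runs through doubly exponential
scales. For `p > log N`, either `n` has a usable large prime factor, or its prime factors are at
most `p ^ (1 + η)` and some of them multiply to an `e` between `p ^ (1 + η)` and
`p ^ (2 - 2 * η)`. Either way the number of `n` is `O(N / p ^ (1 + η))`, and `∑ p ^ (-1 - η)`
converges. So `ξ` depends only on `ε`, and any bound on `p ^ k` that tends to infinity with `x`
suffices.
-/

section Counting

/-- The number of positive integers `n ≤ N` with property `P`, as a real number because it is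
always compared with multiples of `N`. -/
noncomputable def countUpTo (N : ℕ) (P : ℕ → Prop) : ℝ := #{n ∈ Icc 1 N | P n}

variable {N : ℕ} {P Q : ℕ → Prop}

theorem countUpTo_mono (h : ∀ n, 1 ≤ n → n ≤ N → P n → Q n) : countUpTo N P ≤ countUpTo N Q := by
  refine Nat.cast_le.2 (card_le_card fun n hn ↦ ?_)
  simp only [mem_filter, mem_Icc] at hn ⊢
  exact ⟨hn.1, h n hn.1.1 hn.1.2 hn.2⟩

theorem countUpTo_or_le :
    countUpTo N (fun n ↦ P n ∨ Q n) ≤ countUpTo N P + countUpTo N Q := by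
  simp only [countUpTo, filter_or]
  exact_mod_cast card_union_le _ _

theorem countUpTo_exists_mem_le {ι : Type*} (I : Finset ι) (P : ι → ℕ → Prop) :
    countUpTo N (fun n ↦ ∃ i ∈ I, P i n) ≤ ∑ i ∈ I, countUpTo N (P i) := by
  have h : ({n ∈ Icc 1 N | ∃ i ∈ I, P i n} : Finset ℕ) =
      I.biUnion fun i ↦ {n ∈ Icc 1 N | P i n} := by
    ext n
    simp only [mem_filter, mem_biUnion]
    tauto
  simp only [countUpTo, h]
  exact_mod_cast card_biUnion_le

theorem countUpTo_dvd (N d : ℕ) : countUpTo N (d ∣ ·) = (N / d : ℕ) := by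
  rw [← Nat.Ioc_filter_dvd_card_eq_div, ← Icc_add_one_left_eq_Ioc, countUpTo]
  congr!

theorem countUpTo_dvd_le (N d : ℕ) : countUpTo N (d ∣ ·) ≤ (N : ℝ) / d :=
  (countUpTo_dvd N d).trans_le Nat.cast_div_le

theorem sub_one_le_countUpTo_dvd (N d : ℕ) : (N : ℝ) / d - 1 ≤ countUpTo N (d ∣ ·) := by
  rw [countUpTo_dvd, ← Nat.floor_div_eq_div (K := ℝ)]
  exact (Nat.sub_one_lt_floor _).le

/-- The map `d * m ↦ m` is injective on the integers counted, and its values are multiples of `g`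
that are at most `N / A`. -/
theorem countUpTo_exists_mul_le {R : ℕ → ℕ → Prop} {g : ℕ} {A : ℝ} (hA : 0 < A)
    (hR : ∀ d m, R d m → A ≤ d ∧ g ∣ m)
    (huniq : ∀ d d' m, R d m → R d' m → d = d') :
    countUpTo N (fun n ↦ ∃ d m, d * m = n ∧ R d m) ≤ N / (g * A) := by
  choose! d hd using fun m (h : ∃ d, R d m) ↦ h
  have hsub : {n ∈ Icc 1 N | ∃ d m, d * m = n ∧ R d m} ⊆
      ({m ∈ Icc 1 ⌊N / A⌋₊ | g ∣ m} : Finset ℕ).image fun m ↦ d m * m := by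
    intro n hn
    obtain ⟨hn, e, m, rfl, hem⟩ := mem_filter.1 hn
    obtain ⟨hn1, hnN⟩ := mem_Icc.1 hn
    obtain ⟨hAe, hgm⟩ := hR e m hem
    refine mem_image.2 ⟨m, mem_filter.2 ⟨mem_Icc.2 ⟨?_, Nat.le_floor ?_⟩, hgm⟩, ?_⟩
    · exact Nat.pos_of_mul_pos_left hn1
    · rw [le_div_iff₀ hA]
      calc (m : ℝ) * A ≤ m * e := by gcongr
        _ = (e * m : ℕ) := by push_cast; ring
        _ ≤ N := by exact_mod_cast hnN
    · rw [huniq _ _ m (hd m ⟨e, hem⟩) hem]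
  calc countUpTo N (fun n ↦ ∃ d m, d * m = n ∧ R d m)
      ≤ countUpTo ⌊N / A⌋₊ (g ∣ ·) :=
        Nat.cast_le.2 ((card_le_card hsub).trans (card_image_le.trans_eq (by congr!)))
    _ ≤ (⌊N / A⌋₊ : ℝ) / g := countUpTo_dvd_le _ _
    _ ≤ N / A / g := by gcongr; exact Nat.floor_le (by positivity)
    _ = N / (g * A) := by rw [div_div, mul_comm]

end Counting

section TuranKubilius

variable {N : ℕ} {I : Finset ℕ}

theorem sum_card_filter_eq_sum_countUpTo {ι : Type*} (S : Finset ι) (P : ι → ℕ → Prop)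
    [∀ i n, Decidable (P i n)] :
    ∑ n ∈ Icc 1 N, (#{i ∈ S | P i n} : ℝ) = ∑ i ∈ S, countUpTo N (P i) := by
  simp only [countUpTo, card_filter, Nat.cast_sum]
  rw [sum_comm]
  congr!

theorem countUpTo_dvd_and_dvd_le {p q : ℕ} (hp : p.Prime) (hq : q.Prime) :
    countUpTo N (fun n ↦ p ∣ n ∧ q ∣ n) ≤
      N * (1 / p) * (1 / q) + if p = q then (N : ℝ) * (1 / p) else 0 := by
  split_ifs with h
  · subst h
    calc countUpTo N (fun n ↦ p ∣ n ∧ p ∣ n)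
        ≤ countUpTo N (p ∣ ·) := countUpTo_mono fun n _ _ h ↦ h.1
      _ ≤ N / p := countUpTo_dvd_le N p
      _ ≤ N * (1 / p) * (1 / p) + N * (1 / p) := by
        have : (0 : ℝ) ≤ N * (1 / p) * (1 / p) := by positivity
        linarith [mul_one_div (N : ℝ) p]
  · calc countUpTo N (fun n ↦ p ∣ n ∧ q ∣ n)
        ≤ countUpTo N (p * q ∣ ·) := countUpTo_mono fun n _ _ h' ↦
          ((Nat.coprime_primes hp hq).2 h).mul_dvd_of_dvd_of_dvd h'.1 h'.2
      _ ≤ N / (p * q : ℕ) := countUpTo_dvd_le N _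
      _ = N * (1 / p) * (1 / q) + 0 := by push_cast; field_simp; ring

theorem le_sum_card_dvd (hI : ∀ p ∈ I, p.Prime ∧ p ≤ N) :
    N * (∑ p ∈ I, 1 / (p : ℝ)) - N ≤ ∑ n ∈ Icc 1 N, (#{p ∈ I | p ∣ n} : ℝ) := by
  have hcard : #I ≤ N := by
    simpa using card_le_card (s := I) (t := Icc 1 N) fun p hp ↦
      mem_Icc.2 ⟨(hI p hp).1.one_le, (hI p hp).2⟩
  calc N * (∑ p ∈ I, 1 / (p : ℝ)) - N
      ≤ N * (∑ p ∈ I, 1 / (p : ℝ)) - #I := by gcongr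
    _ = ∑ p ∈ I, ((N : ℝ) / p - 1) := by
      simp [mul_sum, sum_sub_distrib, div_eq_mul_inv]
    _ ≤ ∑ p ∈ I, countUpTo N (p ∣ ·) := sum_le_sum fun p _ ↦ sub_one_le_countUpTo_dvd N p
    _ = _ := (sum_card_filter_eq_sum_countUpTo I _).symm

theorem sum_card_dvd_sq_le (hI : ∀ p ∈ I, p.Prime) :
    ∑ n ∈ Icc 1 N, (#{p ∈ I | p ∣ n} : ℝ) ^ 2 ≤
      N * (∑ p ∈ I, 1 / (p : ℝ)) ^ 2 + N * ∑ p ∈ I, 1 / (p : ℝ) := by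
  calc ∑ n ∈ Icc 1 N, (#{p ∈ I | p ∣ n} : ℝ) ^ 2
      = ∑ n ∈ Icc 1 N, (#{x ∈ I ×ˢ I | x.1 ∣ n ∧ x.2 ∣ n} : ℝ) := by
        refine sum_congr rfl fun n _ ↦ ?_
        rw [sq, ← Nat.cast_mul, ← card_product, ← filter_product]
    _ = ∑ p ∈ I, ∑ q ∈ I, countUpTo N (fun n ↦ p ∣ n ∧ q ∣ n) := by
        rw [sum_card_filter_eq_sum_countUpTo, sum_product]
    _ ≤ ∑ p ∈ I, ∑ q ∈ I,
        (N * (1 / p) * (1 / q) + if p = q then (N : ℝ) * (1 / p) else 0) :=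
      sum_le_sum fun p hp ↦ sum_le_sum fun q hq ↦
        countUpTo_dvd_and_dvd_le (hI p hp) (hI q hq)
    _ = N * (∑ p ∈ I, 1 / (p : ℝ)) ^ 2 + N * ∑ p ∈ I, 1 / (p : ℝ) := by
      simp only [sum_add_distrib, sum_ite_eq, sum_ite_mem, inter_self, ← mul_sum, ← sum_mul]
      ring

theorem sum_card_dvd_sub_sq_le (hI : ∀ p ∈ I, p.Prime ∧ p ≤ N) :
    ∑ n ∈ Icc 1 N, ((#{p ∈ I | p ∣ n} : ℝ) - ∑ p ∈ I, 1 / (p : ℝ)) ^ 2 ≤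
      3 * N * ∑ p ∈ I, 1 / (p : ℝ) := by
  have hfirst := le_sum_card_dvd hI
  have hsecond := sum_card_dvd_sq_le (N := N) fun p hp ↦ (hI p hp).1
  set L := ∑ p ∈ I, 1 / (p : ℝ)
  have : 0 ≤ L := sum_nonneg fun p _ ↦ by positivity
  calc ∑ n ∈ Icc 1 N, ((#{p ∈ I | p ∣ n} : ℝ) - L) ^ 2
      = ∑ n ∈ Icc 1 N, (#{p ∈ I | p ∣ n} : ℝ) ^ 2 -
          2 * L * ∑ n ∈ Icc 1 N, (#{p ∈ I | p ∣ n} : ℝ) + N * L ^ 2 := by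
        have hconst : (N : ℝ) * L ^ 2 = ∑ _n ∈ Icc 1 N, L ^ 2 := by simp
        rw [hconst, mul_sum, ← sum_sub_distrib, ← sum_add_distrib]
        exact sum_congr rfl fun n _ ↦ by ring
    _ ≤ N * L ^ 2 + N * L - 2 * L * (N * L - N) + N * L ^ 2 := by gcongr
    _ = 3 * N * L := by ring

/-- Chebyshev's inequality applied to the number of prime divisors in `I`. -/
theorem countUpTo_card_dvd_le (hI : ∀ p ∈ I, p.Prime ∧ p ≤ N) (hL : 0 < ∑ p ∈ I, 1 / (p : ℝ)) :
    countUpTo N (fun n ↦ (#{p ∈ I | p ∣ n} : ℝ) ≤ (∑ p ∈ I, 1 / (p : ℝ)) / 2) ≤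
      12 * N / ∑ p ∈ I, 1 / (p : ℝ) := by
  have hvar := sum_card_dvd_sub_sq_le hI
  set L := ∑ p ∈ I, 1 / (p : ℝ)
  rw [le_div_iff₀ hL]
  refine le_of_mul_le_mul_right ?_ (by positivity : 0 < L / 4)
  calc countUpTo N (fun n ↦ (#{p ∈ I | p ∣ n} : ℝ) ≤ L / 2) * L * (L / 4)
      = ∑ n ∈ Icc 1 N with (#{p ∈ I | p ∣ n} : ℝ) ≤ L / 2, (L / 2) ^ 2 := by
        rw [sum_const, nsmul_eq_mul, countUpTo]
        ring
    _ ≤ ∑ n ∈ Icc 1 N with (#{p ∈ I | p ∣ n} : ℝ) ≤ L / 2, ((#{p ∈ I | p ∣ n} : ℝ) - L) ^ 2 :=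
        sum_le_sum fun n hn ↦ by nlinarith [(mem_filter.1 hn).2]
    _ ≤ ∑ n ∈ Icc 1 N, ((#{p ∈ I | p ∣ n} : ℝ) - L) ^ 2 :=
        sum_le_sum_of_subset_of_nonneg (filter_subset _ _) fun _ _ _ ↦ sq_nonneg _
    _ ≤ 12 * N * (L / 4) := hvar.trans_eq (by ring)

end TuranKubilius

section PrimeReciprocals

/-- The set of primes in `(a, b]`. -/
def primesIoc (a b : ℕ) : Finset ℕ := {p ∈ Ioc a b | p.Prime}

theorem mem_primesIoc {a b p : ℕ} : p ∈ primesIoc a b ↔ (a < p ∧ p ≤ b) ∧ p.Prime := by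
  simp [primesIoc]

theorem sum_primesIoc_add {f : ℕ → ℝ} {a b c : ℕ} (hab : a ≤ b) (hbc : b ≤ c) :
    ∑ p ∈ primesIoc a b, f p + ∑ p ∈ primesIoc b c, f p = ∑ p ∈ primesIoc a c, f p := by
  simp only [primesIoc, sum_filter]
  exact sum_Ioc_consecutive _ hab hbc

theorem theta_sub_theta {a b : ℕ} (hab : a ≤ b) :
    Chebyshev.theta b - Chebyshev.theta a = ∑ p ∈ primesIoc a b, Real.log p := by
  have htheta (n : ℕ) : Chebyshev.theta n = ∑ p ∈ primesIoc 0 n, Real.log p := by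
    rw [Chebyshev.theta, Nat.floor_natCast]
    rfl
  rw [htheta, htheta, ← sum_primesIoc_add a.zero_le hab, add_sub_cancel_left]

theorem theta_sub_theta_le {a b : ℕ} (hab : a ≤ b) :
    Chebyshev.theta b - Chebyshev.theta a ≤ b * Real.log b * ∑ p ∈ primesIoc a b, 1 / (p : ℝ) := by
  rw [theta_sub_theta hab, mul_sum]
  refine sum_le_sum fun p hp ↦ ?_
  obtain ⟨⟨-, hpb⟩, hp⟩ := mem_primesIoc.1 hp
  have hp0 : (0 : ℝ) < p := mod_cast hp.pos
  have hpb' : (p : ℝ) ≤ b := mod_cast hpb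
  rw [mul_one_div, le_div_iff₀ hp0, mul_comm]
  gcongr

theorem eventually_log_add_sqrt_mul_log_le :
    ∀ᶠ x : ℝ in atTop, Real.log (x + 1) + 2 * √x * Real.log x ≤ x / 16 := by
  have hlog := (isLittleO_log_rpow_atTop (r := 1 / 2) (by norm_num)).bound
    (by norm_num : (0 : ℝ) < 1 / 64)
  filter_upwards [hlog, eventually_ge_atTop 2] with x hlogx hx
  rw [← Real.sqrt_eq_rpow, Real.norm_of_nonneg (Real.log_nonneg (by linarith)),
    Real.norm_of_nonneg (Real.sqrt_nonneg x)] at hlogx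
  have hsq : √x * √x = x := Real.mul_self_sqrt (by linarith)
  have hsqrt : 1 ≤ √x := Real.one_le_sqrt.2 (by linarith)
  have hlog1 : Real.log (x + 1) ≤ 2 * Real.log x := by
    calc Real.log (x + 1) ≤ Real.log (x ^ 2) := Real.log_le_log (by linarith) (by nlinarith)
      _ = 2 * Real.log x := by simp
  nlinarith

theorem eventually_le_theta_four_mul_sub_theta :
    ∀ᶠ n : ℕ in atTop, (n : ℝ) ≤ Chebyshev.theta (4 * n : ℕ) - Chebyshev.theta n := by
  have htendsto : Tendsto (fun n : ℕ ↦ ((4 * n : ℕ) : ℝ)) atTop atTop :=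
    tendsto_natCast_atTop_atTop.comp (tendsto_id.const_mul_atTop' (by norm_num))
  filter_upwards [htendsto.eventually eventually_log_add_sqrt_mul_log_le] with n herror
  have hlower := Chebyshev.theta_ge (4 * n)
  have hupper := Chebyshev.theta_le_log4_mul_x (Nat.cast_nonneg (α := ℝ) n)
  have hlog4 : Real.log 4 = 2 * Real.log 2 := by
    rw [show (4 : ℝ) = 2 ^ 2 by norm_num, Real.log_pow, Nat.cast_ofNat]
  rw [hlog4] at hupper
  push_cast at *
  nlinarith [Real.log_two_gt_d9, Nat.cast_nonneg (α := ℝ) n]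

theorem eventually_le_sum_primesIoc_four_mul :
    ∀ᶠ n : ℕ in atTop,
      1 / (4 * Real.log (4 * n)) ≤ ∑ p ∈ primesIoc n (4 * n), 1 / (p : ℝ) := by
  filter_upwards [eventually_le_theta_four_mul_sub_theta, eventually_ge_atTop 1] with n htheta hn
  have hn' : (1 : ℝ) ≤ n := mod_cast hn
  have hlog : 0 < Real.log (4 * n) := Real.log_pos (by linarith)
  have hle := htheta.trans (theta_sub_theta_le (by lia))
  rw [div_le_iff₀ (by positivity)]
  push_cast at hle
  nlinarith

theorem sum_primesIoc_mono {a b c : ℕ} (hab : a ≤ b) (hbc : b ≤ c) :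
    ∑ p ∈ primesIoc a b, 1 / (p : ℝ) ≤ ∑ p ∈ primesIoc a c, 1 / (p : ℝ) := by
  rw [← sum_primesIoc_add hab hbc]
  exact le_add_of_nonneg_right (sum_nonneg fun p _ ↦ by positivity)

theorem eventually_le_sum_primesIoc_four_mul_of_le_sq :
    ∀ᶠ t : ℕ in atTop, ∀ n, t ≤ n → 4 * n ≤ t ^ 2 →
      1 / (8 * Real.log t) ≤ ∑ p ∈ primesIoc n (4 * n), 1 / (p : ℝ) := by
  obtain ⟨t₀, hblock⟩ := eventually_atTop.1 eventually_le_sum_primesIoc_four_mul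
  filter_upwards [eventually_ge_atTop t₀, eventually_ge_atTop 1] with t ht ht1 n htn hn
  refine le_trans ?_ (hblock n (ht.trans htn))
  have hpos : 0 < Real.log (4 * n) := Real.log_pos (mod_cast (by lia : 1 < 4 * n))
  have hle : Real.log (4 * n) ≤ 2 * Real.log t := by
    calc Real.log (4 * n) ≤ Real.log (t ^ 2) :=
          Real.log_le_log (mod_cast (by lia : 0 < 4 * n)) (mod_cast hn)
      _ = 2 * Real.log t := by simp
  exact one_div_le_one_div_of_le (by positivity) (by linarith)

theorem mul_le_sum_primesIoc_mul_four_pow {t j : ℕ} {c : ℝ}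
    (hc : ∀ n, t ≤ n → 4 * n ≤ t ^ 2 → c ≤ ∑ p ∈ primesIoc n (4 * n), 1 / (p : ℝ))
    (hj : 4 ^ j ≤ t) : j * c ≤ ∑ p ∈ primesIoc t (t * 4 ^ j), 1 / (p : ℝ) := by
  induction j with
  | zero => simpa using sum_nonneg fun p _ ↦ by positivity
  | succ j ih =>
    rw [pow_succ] at hj
    have hle : t ≤ t * 4 ^ j := Nat.le_mul_of_pos_right t (by positivity)
    have hnew := hc (t * 4 ^ j) hle (by nlinarith)
    rw [pow_succ, ← mul_assoc, ← sum_primesIoc_add hle (by lia), mul_comm _ 4]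
    push_cast
    linarith [ih (by lia)]

/-- The interval `(t, t ^ 2]` contains about `log t / log 4` blocks `(n, 4 * n]`, and each of them
contributes about `1 / log t`. -/
theorem eventually_le_sum_primesIoc_sq :
    ∀ᶠ t : ℕ in atTop, 1 / 32 ≤ ∑ p ∈ primesIoc t (t ^ 2), 1 / (p : ℝ) := by
  filter_upwards [eventually_le_sum_primesIoc_four_mul_of_le_sq, eventually_ge_atTop 4]
    with t hblock ht
  set k := Nat.log 4 t
  have hkt : 4 ^ k ≤ t := Nat.pow_log_le_self 4 (by lia)
  have hk1 : (1 : ℝ) ≤ k := mod_cast Nat.log_pos (by lia) ht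
  have hlog : 0 < Real.log t := Real.log_pos (mod_cast (by lia : 1 < t))
  have hlogle : Real.log t ≤ 4 * k := by
    calc Real.log t ≤ Real.log (2 ^ (2 * (k + 1)) : ℝ) := by
          refine Real.log_le_log (mod_cast (by lia)) ?_
          rw [pow_mul]
          exact_mod_cast (Nat.lt_pow_succ_log_self (by lia) t).le
      _ = 2 * (k + 1) * Real.log 2 := by rw [Real.log_pow]; push_cast; ring
      _ ≤ 2 * (k + 1) * 1 := by gcongr; linarith [Real.log_two_lt_d9]
      _ ≤ 4 * k := by linarith
  calc (1 : ℝ) / 32 ≤ k * (1 / (8 * Real.log t)) := by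
        rw [mul_one_div, div_le_div_iff₀ (by norm_num) (by positivity)]
        linarith
    _ ≤ ∑ p ∈ primesIoc t (t * 4 ^ k), 1 / (p : ℝ) := mul_le_sum_primesIoc_mul_four_pow hblock hkt
    _ ≤ ∑ p ∈ primesIoc t (t ^ 2), 1 / (p : ℝ) :=
      sum_primesIoc_mono (Nat.le_mul_of_pos_right t (by positivity)) (by rw [sq]; gcongr)

theorem eventually_le_sum_primesIoc_pow :
    ∀ᶠ t : ℕ in atTop, ∀ J : ℕ, (J : ℝ) / 32 ≤ ∑ p ∈ primesIoc t (t ^ 2 ^ J), 1 / (p : ℝ) := by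
  obtain ⟨t₀, hsq⟩ := eventually_atTop.1 eventually_le_sum_primesIoc_sq
  filter_upwards [eventually_ge_atTop t₀, eventually_ge_atTop 1] with t ht ht1 J
  induction J with
  | zero => simpa using sum_nonneg fun p _ ↦ by positivity
  | succ J ih =>
    have hle : t ≤ t ^ 2 ^ J := Nat.le_self_pow (by positivity) t
    have hnew := hsq _ (ht.trans hle)
    rw [← pow_mul, ← pow_succ] at hnew
    rw [← sum_primesIoc_add hle (Nat.pow_le_pow_right ht1 (by gcongr <;> lia))]
    push_cast
    linarith

end PrimeReciprocals

section ExceptionalSets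

variable {ε : ℝ}

theorem countUpTo_exists_sq_dvd_le (N ξ : ℕ) :
    countUpTo N (fun n ↦ ∃ r > ξ, r ^ 2 ∣ n) ≤ N * (2 / (ξ + 1)) := by
  calc countUpTo N (fun n ↦ ∃ r > ξ, r ^ 2 ∣ n)
      ≤ countUpTo N (fun n ↦ ∃ r ∈ Ioo ξ (N + 1), r ^ 2 ∣ n) := by
        refine countUpTo_mono fun n hn hnN ⟨r, hr, hrn⟩ ↦ ⟨r, mem_Ioo.2 ⟨hr, ?_⟩, hrn⟩
        have := Nat.le_of_dvd hn hrn
        nlinarith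
    _ ≤ ∑ r ∈ Ioo ξ (N + 1), (N : ℝ) / (r ^ 2 : ℕ) :=
        (countUpTo_exists_mem_le _ _).trans (sum_le_sum fun r _ ↦ countUpTo_dvd_le N _)
    _ = N * ∑ r ∈ Ioo ξ (N + 1), ((r : ℝ) ^ 2)⁻¹ := by
        simp [mul_sum, div_eq_mul_inv]
    _ ≤ N * (2 / (ξ + 1)) := by gcongr; exact sum_Ioo_inv_sq_le ξ (N + 1)

theorem eventually_mul_two_div_add_one_le (hε : 0 < ε) (C : ℝ) :
    ∀ᶠ K : ℕ in atTop, C * (2 / ((K : ℝ) + 1)) ≤ ε := by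
  have h : Tendsto (fun K : ℕ ↦ C * (2 / ((K : ℝ) + 1))) atTop (nhds (C * 0)) :=
    (tendsto_const_nhds.div_atTop
      (tendsto_natCast_atTop_atTop.atTop_add tendsto_const_nhds)).const_mul C
  rw [mul_zero] at h
  exact h.eventually_le_const hε

theorem countUpTo_forall_not_dvd_le {N : ℕ} {I : Finset ℕ} (hI : ∀ p ∈ I, p.Prime ∧ p ≤ N)
    (hL : 0 < ∑ p ∈ I, 1 / (p : ℝ)) :
    countUpTo N (fun n ↦ ∀ p ∈ I, ¬ p ∣ n) ≤ 12 * N / ∑ p ∈ I, 1 / (p : ℝ) := by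
  refine le_trans (countUpTo_mono fun n _ _ hn ↦ ?_) (countUpTo_card_dvd_le hI hL)
  rw [filter_false_of_mem hn]
  rw [card_empty, Nat.cast_zero]
  exact (half_pos hL).le

/-- The primes between `2 ^ 2 ^ (j + 2)` and `2 ^ 2 ^ (j ^ 2 + j + 2)`. They lie in
`[p ^ 2, exp √p]` when `log₂ log₂ p` has integer part `j`, and the sum of their reciprocals has
order at least `j ^ 2`, the inverse of a summable sequence. -/
def primesBlock (j : ℕ) : Finset ℕ := primesIoc (2 ^ 2 ^ (j + 2)) (2 ^ 2 ^ (j ^ 2 + j + 2))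

theorem eventually_le_sum_primesBlock :
    ∀ᶠ j : ℕ in atTop, (j : ℝ) ^ 2 / 32 ≤ ∑ p ∈ primesBlock j, 1 / (p : ℝ) := by
  have htendsto : Tendsto (fun j : ℕ ↦ 2 ^ 2 ^ (j + 2)) atTop atTop :=
    (tendsto_pow_atTop_atTop_of_one_lt one_lt_two).comp
      ((tendsto_pow_atTop_atTop_of_one_lt one_lt_two).comp (tendsto_add_atTop_nat 2))
  filter_upwards [htendsto.eventually eventually_le_sum_primesIoc_pow] with j hj
  convert hj (j ^ 2) using 2
  · push_cast; rfl
  · rw [primesBlock, ← pow_mul, ← pow_add]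
    ring_nf

theorem countUpTo_primesBlock_le {N j : ℕ} (hj : 0 < j) (hN : 2 ^ 2 ^ (j ^ 2 + j + 2) ≤ N)
    (hsum : (j : ℝ) ^ 2 / 32 ≤ ∑ p ∈ primesBlock j, 1 / (p : ℝ)) :
    countUpTo N (fun n ↦ ∀ p ∈ primesBlock j, ¬ p ∣ n) ≤ 384 * N * ((j : ℝ) ^ 2)⁻¹ := by
  have hj0 : 0 < (j : ℝ) ^ 2 / 32 := by positivity
  calc countUpTo N (fun n ↦ ∀ p ∈ primesBlock j, ¬ p ∣ n)
      ≤ 12 * N / ∑ p ∈ primesBlock j, 1 / (p : ℝ) :=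
        countUpTo_forall_not_dvd_le (fun p hp ↦
          ⟨(mem_primesIoc.1 hp).2, (mem_primesIoc.1 hp).1.2.trans hN⟩) (hj0.trans_le hsum)
    _ ≤ 12 * N / ((j : ℝ) ^ 2 / 32) := by gcongr
    _ = 384 * N * ((j : ℝ) ^ 2)⁻¹ := by field_simp; ring

theorem sq_add_add_two_le_two_pow {j : ℕ} (hj : 7 ≤ j) : j ^ 2 + j + 2 ≤ 2 ^ (j - 1) := by
  induction j, hj using Nat.le_induction with
  | base => norm_num
  | succ j hj ih =>
    have hpow : 2 ^ (j + 1 - 1) = 2 * 2 ^ (j - 1) := by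
      rw [← pow_succ']
      congr 1
      lia
    nlinarith

theorem two_pow_two_pow_le_exp_sqrt {j p : ℕ} (hj : 7 ≤ j) (hp : 2 ^ 2 ^ j ≤ p) :
    (2 : ℝ) ^ 2 ^ (j ^ 2 + j + 2) ≤ Real.exp √p := by
  have hsqrt : (2 : ℝ) ^ 2 ^ (j - 1) ≤ √p := by
    refine Real.le_sqrt_of_sq_le ?_
    rw [← pow_mul, ← pow_succ, Nat.sub_add_cancel (by lia)]
    exact_mod_cast hp
  calc (2 : ℝ) ^ 2 ^ (j ^ 2 + j + 2)
      ≤ Real.exp 1 ^ 2 ^ (j ^ 2 + j + 2) := by gcongr; linarith [Real.exp_one_gt_d9]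
    _ = Real.exp (2 ^ (j ^ 2 + j + 2)) := by rw [← Real.exp_nat_mul]; simp
    _ ≤ Real.exp √p := by
      gcongr
      refine le_trans ?_ hsqrt
      gcongr
      · norm_num
      · exact sq_add_add_two_le_two_pow hj

/-- The number `n` has a prime factor in `[p ^ 2, exp √p]`: large compared with `p`, but with a
logarithm that is at most `p`. This serves the primes `p ≤ log N`. -/
def HasPrimeFactorInWindow (p n : ℕ) : Prop :=
  ∃ P : ℕ, P.Prime ∧ P ∣ n ∧ p ^ 2 ≤ P ∧ (P : ℝ) ≤ Real.exp √p

theorem exists_two_pow_two_pow_le_lt {p : ℕ} (hp : 2 ≤ p) :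
    ∃ j, 2 ^ 2 ^ j ≤ p ∧ p < 2 ^ 2 ^ (j + 1) := by
  have hlog : Nat.log 2 p ≠ 0 := (Nat.log_pos one_lt_two hp).ne'
  refine ⟨Nat.log 2 (Nat.log 2 p), ?_, ?_⟩
  · exact Nat.pow_le_of_le_log (by lia) (Nat.pow_log_le_self 2 hlog)
  · exact Nat.lt_pow_of_log_lt one_lt_two (Nat.lt_pow_succ_log_self one_lt_two _)

theorem hasPrimeFactorInWindow_of_mem_primesBlock {j p n P : ℕ} (hj : 7 ≤ j)
    (hjp : 2 ^ 2 ^ j ≤ p) (hpj : p < 2 ^ 2 ^ (j + 1)) (hP : P ∈ primesBlock j) (hPn : P ∣ n) :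
    HasPrimeFactorInWindow p n := by
  obtain ⟨⟨hlower, hupper⟩, hPprime⟩ := mem_primesIoc.1 hP
  refine ⟨P, hPprime, hPn, ?_, le_trans (mod_cast hupper) (two_pow_two_pow_le_exp_sqrt hj hjp)⟩
  calc p ^ 2 ≤ (2 ^ 2 ^ (j + 1)) ^ 2 := by gcongr
    _ = 2 ^ 2 ^ (j + 2) := by rw [← pow_mul, ← pow_succ]
    _ ≤ P := hlower.le

theorem exists_primesBlock_of_not_hasPrimeFactorInWindow {K p n N : ℕ} (hK : 7 ≤ K)
    (hKp : 2 ^ 2 ^ (K + 1) ≤ p) (hpN : p ≤ Real.log N) (hn : ¬ HasPrimeFactorInWindow p n) :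
    ∃ j ∈ Ioo K (N + 1), 2 ^ 2 ^ (j ^ 2 + j + 2) ≤ N ∧ ∀ P ∈ primesBlock j, ¬ P ∣ n := by
  have hp2 : 2 ≤ p := (Nat.le_self_pow (by positivity) 2).trans hKp
  have hp1 : (1 : ℝ) ≤ p := mod_cast (by lia : 1 ≤ p)
  have hN : 0 < N := by
    refine Nat.pos_of_ne_zero fun h ↦ ?_
    rw [h, Nat.cast_zero, Real.log_zero] at hpN
    linarith
  have hexp : Real.exp p ≤ N := (Real.le_log_iff_exp_le (mod_cast hN)).1 hpN
  obtain ⟨j, hjp, hpj⟩ := exists_two_pow_two_pow_le_lt hp2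
  have hKj : K < j := by
    have hlt := hKp.trans_lt hpj
    rw [Nat.pow_lt_pow_iff_right (by lia), Nat.pow_lt_pow_iff_right (by lia)] at hlt
    lia
  have hjN : (j : ℝ) ≤ N := by
    calc (j : ℝ) ≤ p := mod_cast (j.lt_two_pow_self.trans (2 ^ j).lt_two_pow_self).le.trans hjp
      _ ≤ Real.exp p := by linarith [Real.add_one_le_exp (p : ℝ)]
      _ ≤ N := hexp
  refine ⟨j, mem_Ioo.2 ⟨hKj, Nat.lt_succ_of_le (mod_cast hjN)⟩, ?_, fun P hP hPn ↦
    hn (hasPrimeFactorInWindow_of_mem_primesBlock (by lia) hjp hpj hP hPn)⟩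
  have htower : (2 : ℝ) ^ 2 ^ (j ^ 2 + j + 2) ≤ N :=
    calc (2 : ℝ) ^ 2 ^ (j ^ 2 + j + 2) ≤ Real.exp √p :=
          two_pow_two_pow_le_exp_sqrt (by lia) hjp
      _ ≤ Real.exp p := by gcongr; exact Real.sqrt_le_iff.2 ⟨by linarith, by nlinarith⟩
      _ ≤ N := hexp
  exact_mod_cast htower

theorem eventually_countUpTo_not_hasPrimeFactorInWindow_le (hε : 0 < ε) :
    ∀ᶠ ξ : ℕ in atTop, ∀ N : ℕ,
      countUpTo N (fun n ↦ ∃ p > ξ, (p : ℝ) ≤ Real.log N ∧ ¬ HasPrimeFactorInWindow p n) ≤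
        ε * N := by
  obtain ⟨j₀, hsum⟩ := eventually_atTop.1 eventually_le_sum_primesBlock
  obtain ⟨K, hKε, hK⟩ := ((eventually_mul_two_div_add_one_le hε 384).and
    (eventually_ge_atTop (max 7 j₀))).exists
  filter_upwards [eventually_ge_atTop (2 ^ 2 ^ (K + 1))] with ξ hξ N
  calc countUpTo N (fun n ↦ ∃ p > ξ, (p : ℝ) ≤ Real.log N ∧ ¬ HasPrimeFactorInWindow p n)
      ≤ countUpTo N (fun n ↦ ∃ j ∈ Ioo K (N + 1),
          2 ^ 2 ^ (j ^ 2 + j + 2) ≤ N ∧ ∀ P ∈ primesBlock j, ¬ P ∣ n) :=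
        countUpTo_mono fun n _ _ ⟨p, hp, hpN, hpn⟩ ↦
          exists_primesBlock_of_not_hasPrimeFactorInWindow (by lia) (hξ.trans hp.le) hpN hpn
    _ ≤ ∑ j ∈ Ioo K (N + 1), 384 * N * ((j : ℝ) ^ 2)⁻¹ := by
      refine (countUpTo_exists_mem_le _ _).trans (sum_le_sum fun j hj ↦ ?_)
      have hKj := (mem_Ioo.1 hj).1
      by_cases hN : 2 ^ 2 ^ (j ^ 2 + j + 2) ≤ N
      · simpa only [hN, true_and] using countUpTo_primesBlock_le (by lia) hN (hsum j (by lia))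
      · simp only [hN, false_and, countUpTo, filter_false, card_empty, Nat.cast_zero]
        positivity
    _ = 384 * N * ∑ j ∈ Ioo K (N + 1), ((j : ℝ) ^ 2)⁻¹ := by rw [mul_sum]
    _ ≤ 384 * N * (2 / (K + 1)) := by gcongr; exact sum_Ioo_inv_sq_le K (N + 1)
    _ = 384 * (2 / (K + 1)) * N := by ring
    _ ≤ ε * N := by gcongr

/-- The number `n` has at least two prime factors in `(A, B]`, so that there is one different from
any prescribed prime. -/
def HasTwoPrimeFactorsIoc (A B : ℝ) (n : ℕ) : Prop :=
  1 < #(n.primeFactors.filter fun p : ℕ ↦ A < p ∧ p ≤ B)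

theorem countUpTo_not_hasTwoPrimeFactorsIoc_le {N t : ℕ} {A B : ℝ} {J : ℕ}
    (hJ : 64 ≤ J) (hA : A < t + 1) (hB : (t : ℝ) ^ 2 ^ J ≤ B) (hBN : B ≤ N)
    (hsum : (J : ℝ) / 32 ≤ ∑ p ∈ primesIoc t (t ^ 2 ^ J), 1 / (p : ℝ)) :
    countUpTo N (fun n ↦ ¬ HasTwoPrimeFactorsIoc A B n) ≤ 384 / J * N := by
  have hJ' : (64 : ℝ) ≤ J := mod_cast hJ
  have hprimes : ∀ p ∈ primesIoc t (t ^ 2 ^ J), p.Prime ∧ A < (p : ℝ) ∧ (p : ℝ) ≤ B := by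
    intro p hp
    obtain ⟨⟨htp, hpt⟩, hp⟩ := mem_primesIoc.1 hp
    exact ⟨hp, hA.trans_le (mod_cast htp), le_trans (mod_cast hpt) hB⟩
  set I := primesIoc t (t ^ 2 ^ J)
  set L := ∑ p ∈ I, 1 / (p : ℝ)
  calc countUpTo N (fun n ↦ ¬ HasTwoPrimeFactorsIoc A B n)
      ≤ countUpTo N (fun n ↦ (#{p ∈ I | p ∣ n} : ℝ) ≤ L / 2) := by
        refine countUpTo_mono fun n hn _ hfew ↦ ?_
        rw [HasTwoPrimeFactorsIoc, not_lt] at hfew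
        have hsub : {p ∈ I | p ∣ n} ⊆ n.primeFactors.filter fun p : ℕ ↦ A < p ∧ p ≤ B := by
          intro p hp
          obtain ⟨hpI, hpn⟩ := mem_filter.1 hp
          exact mem_filter.2 ⟨Nat.mem_primeFactors.2 ⟨(hprimes p hpI).1, hpn, by lia⟩,
            (hprimes p hpI).2⟩
        have hcard : (#{p ∈ I | p ∣ n} : ℝ) ≤ 1 :=
          mod_cast (card_le_card hsub).trans hfew
        linarith
    _ ≤ 12 * N / L := countUpTo_card_dvd_le
        (fun p hp ↦ ⟨(hprimes p hp).1, mod_cast (hprimes p hp).2.2.trans hBN⟩) (by linarith)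
    _ ≤ 12 * N / (J / 32) := by gcongr
    _ = 384 / J * N := by field_simp; ring

theorem exists_eventually_countUpTo_not_hasTwoPrimeFactorsIoc_le {β : ℝ} (hε : 0 < ε) (hβ : 0 < β)
    (hβ1 : β ≤ 1) :
    ∃ α, 0 < α ∧ α ≤ β / 4 ∧ ∀ᶠ N : ℕ in atTop,
      countUpTo N (fun n ↦ ¬ HasTwoPrimeFactorsIoc (N ^ α) (N ^ β) n) ≤ ε * N := by
  obtain ⟨J, hJε⟩ := exists_nat_ge (max 64 (384 / ε))
  have hJ : 64 ≤ J := by exact_mod_cast (le_max_left _ _).trans hJε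
  have hJ0 : (0 : ℝ) < J := mod_cast (by lia)
  have hfour : (4 : ℝ) ≤ 2 ^ J := by
    calc (4 : ℝ) = 2 ^ 2 := by norm_num
      _ ≤ 2 ^ J := pow_le_pow_right₀ one_le_two (by lia)
  set α := β / 2 ^ J
  have hα : 0 < α := by positivity
  refine ⟨α, hα, div_le_div_of_nonneg_left hβ.le (by norm_num) hfour, ?_⟩
  have hfloor : Tendsto (fun N : ℕ ↦ ⌊(N : ℝ) ^ α⌋₊) atTop atTop :=
    tendsto_nat_floor_atTop.comp ((tendsto_rpow_atTop hα).comp tendsto_natCast_atTop_atTop)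
  filter_upwards [hfloor.eventually eventually_le_sum_primesIoc_pow, eventually_ge_atTop 1]
    with N hsum hN
  have hN1 : (1 : ℝ) ≤ N := mod_cast hN
  refine (countUpTo_not_hasTwoPrimeFactorsIoc_le hJ (Nat.lt_floor_add_one _) ?_ ?_
    (hsum J)).trans ?_
  · calc (⌊(N : ℝ) ^ α⌋₊ : ℝ) ^ 2 ^ J ≤ ((N : ℝ) ^ α) ^ 2 ^ J := by
          gcongr
          exact Nat.floor_le (by positivity)
      _ = (N : ℝ) ^ β := by
        rw [← Real.rpow_mul_natCast (by positivity)]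
        congr 1
        push_cast
        exact div_mul_cancel₀ β (by positivity)
  · exact (Real.rpow_le_rpow_of_exponent_le hN1 hβ1).trans_eq (Real.rpow_one _)
  · gcongr
    rw [div_le_iff₀ hJ0, mul_comm, ← div_le_iff₀ hε]
    exact (le_max_right _ _).trans hJε

end ExceptionalSets

section SumOfDivisors

theorem sigma1_mul {a b : ℕ} (h : a.Coprime b) : sigma1 (a * b) = sigma1 a * sigma1 b :=
  ArithmeticFunction.isMultiplicative_sigma.map_mul_of_coprime h

theorem sigma1_prime {p : ℕ} (hp : p.Prime) : sigma1 p = p + 1 := by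
  simp [sigma1, ArithmeticFunction.sigma_one_apply, hp.sum_divisors]

theorem sigma1_eq_sum_properDivisors_add (n : ℕ) : sigma1 n = ∑ d ∈ n.properDivisors, d + n := by
  rw [sigma1, ArithmeticFunction.sigma_one_apply, Nat.sum_divisors_eq_sum_properDivisors_add_self]

theorem s_eq_sum_properDivisors (n : ℕ) : s n = ∑ d ∈ n.properDivisors, d := by
  rw [s, sigma1_eq_sum_properDivisors_add, Nat.add_sub_cancel]

theorem s_add_self (n : ℕ) : s n + n = sigma1 n := by
  rw [s_eq_sum_properDivisors, sigma1_eq_sum_properDivisors_add]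

theorem s_pos {n : ℕ} (hn : 2 ≤ n) : 0 < s n := by
  rw [s_eq_sum_properDivisors]
  exact sum_pos (fun d hd ↦ Nat.pos_of_mem_properDivisors hd)
    ⟨1, Nat.one_mem_properDivisors_iff_one_lt.2 hn⟩

theorem s_le_sq (n : ℕ) : s n ≤ n ^ 2 :=
  (Nat.sub_le _ _).trans (ArithmeticFunction.sigma_le_pow_succ 1 n)

theorem sigma1_le_mul_one_add_log (n : ℕ) : (sigma1 n : ℝ) ≤ n * (1 + Real.log n) := by
  calc (sigma1 n : ℝ) = ∑ d ∈ n.divisors, ((n / d : ℕ) : ℝ) := by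
        simp [sigma1, ArithmeticFunction.sigma_eq_sum_div]
    _ ≤ ∑ d ∈ n.divisors, n * (d : ℝ)⁻¹ := by
        refine sum_le_sum fun d _ ↦ ?_
        rw [← div_eq_mul_inv]
        exact Nat.cast_div_le
    _ ≤ n * ∑ d ∈ Icc 1 n, (d : ℝ)⁻¹ := by
        rw [← mul_sum]
        gcongr
        exact fun d hd ↦ mem_Icc.2 ⟨Nat.pos_of_mem_divisors hd, Nat.divisor_le hd⟩
    _ ≤ n * (1 + Real.log n) := by
        gcongr
        simpa [harmonic_eq_sum_Icc] using harmonic_le_one_add_log n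

/-- A prime `R` dividing `σ(e)` divides `r + 1` for some prime `r ∣ e` with `r ≤ R`, which forces
`r + 1 = R` and hence `r = 2`. -/
theorem not_dvd_sigma1_of_forall_prime_le {e R : ℕ} (he : Squarefree e) (hodd : Odd e)
    (hR : R.Prime) (hmax : ∀ r, r.Prime → r ∣ e → r ≤ R) : ¬ R ∣ sigma1 e := by
  induction e using Nat.recOnMul with
  | zero => simp at he
  | one => simpa [sigma1] using hR.ne_one
  | prime r hr =>
    rw [sigma1_prime hr]
    intro hdvd
    have hrR : r ≤ R := hmax r hr dvd_rfl
    have hRr : R ≤ r + 1 := Nat.le_of_dvd (by lia) hdvd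
    obtain rfl | rfl : R = r ∨ R = r + 1 := by lia
    · exact hr.one_lt.not_ge (Nat.le_of_dvd one_pos ((Nat.dvd_add_right dvd_rfl).1 hdvd))
    · have := hR.eq_two_or_odd'
      have := hr.two_le
      grind
  | mul a b iha ihb =>
    rw [sigma1_mul (Nat.coprime_of_squarefree_mul he), hR.dvd_mul, not_or]
    exact ⟨iha (he.squarefree_of_dvd (Dvd.intro _ rfl)) (Nat.odd_mul.1 hodd).1
        fun r hr h ↦ hmax r hr (h.mul_right _),
      ihb (he.squarefree_of_dvd (Dvd.intro_left _ rfl)) (Nat.odd_mul.1 hodd).2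
        fun r hr h ↦ hmax r hr (h.mul_left _)⟩

theorem exists_prime_dvd_both_of_sigma1_mul_eq {e e' : ℕ} (he : Squarefree e) (hodd : Odd e)
    (he' : Squarefree e') (hodd' : Odd e') (h : sigma1 e * e' = sigma1 e' * e)
    (hne : e * e' ≠ 1) : ∃ R, R.Prime ∧ R ∣ e ∧ R ∣ e' := by
  have hmul : e * e' ≠ 0 := mul_ne_zero he.ne_zero he'.ne_zero
  obtain ⟨R, hR, hmax⟩ := exists_max_image _ id (Nat.nonempty_primeFactors.2
    (by lia : 1 < e * e'))
  obtain ⟨hRprime, hRdvd, -⟩ := Nat.mem_primeFactors.1 hR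
  have hRe : ¬ R ∣ sigma1 e := not_dvd_sigma1_of_forall_prime_le he hodd hRprime
    fun r hr hre ↦ hmax r (Nat.mem_primeFactors.2 ⟨hr, hre.mul_right _, hmul⟩)
  have hRe' : ¬ R ∣ sigma1 e' := not_dvd_sigma1_of_forall_prime_le he' hodd' hRprime
    fun r hr hre ↦ hmax r (Nat.mem_primeFactors.2 ⟨hr, hre.mul_left _, hmul⟩)
  have hiff : R ∣ e ↔ R ∣ e' := by
    have := congrArg (R ∣ ·) h
    simpa [hRprime.dvd_mul, hRe, hRe', eq_comm] using this
  refine ⟨R, hRprime, ?_⟩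
  have := hRprime.dvd_mul.1 hRdvd
  tauto

/-- The largest prime factor of `e * e'` divides both `e` and `e'`, and cancels. -/
theorem eq_of_sigma1_mul_eq {e e' : ℕ} (he : Squarefree e) (hodd : Odd e) (he' : Squarefree e')
    (hodd' : Odd e') (h : sigma1 e * e' = sigma1 e' * e) : e = e' := by
  induction e using Nat.strong_induction_on generalizing e' with
  | _ e ih =>
  by_cases hone : e * e' = 1
  · rw [Nat.eq_one_of_mul_eq_one_right hone, Nat.eq_one_of_mul_eq_one_left hone]
  obtain ⟨R, hR, ⟨f, rfl⟩, ⟨f', rfl⟩⟩ :=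
    exists_prime_dvd_both_of_sigma1_mul_eq he hodd he' hodd' h hone
  rw [sigma1_mul (Nat.coprime_of_squarefree_mul he),
    sigma1_mul (Nat.coprime_of_squarefree_mul he')] at h
  have hsR : 0 < sigma1 R * R := by
    rw [sigma1_prime hR]
    exact Nat.mul_pos (by lia) hR.pos
  have hf : f < R * f :=
    lt_mul_left (Nat.pos_of_ne_zero (right_ne_zero_of_mul he.ne_zero)) hR.one_lt
  rw [ih f hf (he.squarefree_of_dvd (Dvd.intro_left _ rfl)) (Nat.odd_mul.1 hodd).2
    (he'.squarefree_of_dvd (Dvd.intro_left _ rfl)) (Nat.odd_mul.1 hodd').2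
    (Nat.eq_of_mul_eq_mul_left hsR (by linarith))]

end SumOfDivisors

section UnitaryPrime

theorem pow_dvd_of_pow_add_dvd_mul {M : Type*} [CommMonoidWithZero M] [IsCancelMulZero M]
    {p a b : M} (hp : Prime p) {k l : ℕ} (hab : p ^ (k + l) ∣ a * b) (hb : ¬ p ^ (l + 1) ∣ b) :
    p ^ k ∣ a := by
  induction l generalizing b with
  | zero => exact hp.pow_dvd_of_dvd_mul_right k (by simpa using hb) hab
  | succ l ih =>
    by_cases hpb : p ∣ b
    · obtain ⟨c, rfl⟩ := hpb
      refine ih (b := c) ?_ fun hc ↦ hb (by rw [pow_succ']; exact mul_dvd_mul_left p hc)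
      rw [← add_assoc, pow_succ', mul_left_comm] at hab
      exact (mul_dvd_mul_iff_left hp.ne_zero).1 hab
    · exact (pow_dvd_pow p (Nat.le_add_right k _)).trans (hp.pow_dvd_of_dvd_mul_right _ hpb hab)

theorem s_prime_mul {P m : ℕ} (hP : P.Prime) (hPm : ¬ P ∣ m) : s (P * m) = P * s m + sigma1 m := by
  have h := s_add_self (P * m)
  rw [sigma1_mul (hP.coprime_iff_not_dvd.2 hPm), sigma1_prime hP] at h
  nlinarith [s_add_self m]

/-- As a function of `P`, the value `s (P * m)` is linear with slope `s m`. -/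
theorem modEq_of_pow_dvd_s_prime_mul {P P' m p k l : ℕ} (hp : p.Prime) (hP : P.Prime)
    (hP' : P'.Prime) (hPm : ¬ P ∣ m) (hPm' : ¬ P' ∣ m) (hpm : ¬ p ^ (l + 1) ∣ m)
    (h : p ^ (k + l) ∣ s (P * m)) (h' : p ^ (k + l) ∣ s (P' * m)) : P ≡ P' [MOD p ^ k] := by
  rcases k.eq_zero_or_pos with rfl | hk
  · simp [Nat.modEq_one]
  have hslope : ¬ p ^ (l + 1) ∣ s m := by
    intro hsm
    have hsigma : p ^ (l + 1) ∣ sigma1 m := by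
      have := (pow_dvd_pow p (by lia : l + 1 ≤ k + l)).trans h
      rw [s_prime_mul hP hPm] at this
      exact (Nat.dvd_add_right (hsm.mul_left P)).1 this
    rw [← s_add_self] at hsigma
    exact hpm ((Nat.dvd_add_right hsm).1 hsigma)
  have hdiff : (p : ℤ) ^ (k + l) ∣ ((P' : ℤ) - P) * s m := by
    have := dvd_sub (Int.natCast_dvd_natCast.2 h') (Int.natCast_dvd_natCast.2 h)
    rw [s_prime_mul hP hPm, s_prime_mul hP' hPm'] at this
    push_cast at this
    exact this.trans (dvd_of_eq (by ring))
  rw [Nat.modEq_iff_dvd, Nat.cast_pow]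
  exact pow_dvd_of_pow_add_dvd_mul (Nat.prime_iff_prime_int.1 hp) hdiff (mod_cast hslope)

/-- The number `n` is a product `P * m`, where `g ∣ m` and `P` is a prime in `[V, W]` that does not
divide `m`. The divisor `g` of the cofactor is `1` or the prime whose powers are to divide `s n`. -/
def HasUnitaryPrime (g : ℕ) (V W : ℝ) (n : ℕ) : Prop :=
  ∃ P m : ℕ, P * m = n ∧ P.Prime ∧ ¬ P ∣ m ∧ V ≤ P ∧ P ≤ W ∧ g ∣ m

variable {N p k l g : ℕ} {V W : ℝ}

theorem countUpTo_unitaryPrime_block_le (hp : p.Prime) (t : ℕ) {A : ℝ} (hA : 0 < A) :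
    countUpTo N (fun n ↦ ∃ P m, P * m = n ∧ P.Prime ∧ ¬ P ∣ m ∧ A ≤ P ∧ P / p ^ k = t ∧ g ∣ m ∧
      ¬ p ^ (l + 1) ∣ n ∧ p ^ (k + l) ∣ s n) ≤ N / (g * A) := by
  refine le_trans (countUpTo_mono ?_) (countUpTo_exists_mul_le (g := g) hA
    (R := fun P m ↦ P.Prime ∧ ¬ P ∣ m ∧ A ≤ P ∧ P / p ^ k = t ∧ g ∣ m ∧
      ¬ p ^ (l + 1) ∣ m ∧ p ^ (k + l) ∣ s (P * m)) ?_ ?_)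
  · rintro _ - - ⟨P, m, rfl, hP, hPm, hAP, ht, hg, hpn, hs⟩
    exact ⟨P, m, rfl, hP, hPm, hAP, ht, hg, fun h ↦ hpn (h.mul_left P), hs⟩
  · rintro P m ⟨-, -, hAP, -, hg, -, -⟩
    exact ⟨hAP, hg⟩
  · rintro P P' m ⟨hP, hPm, -, ht, -, hpm, hs⟩ ⟨hP', hPm', -, ht', -, -, hs'⟩
    have hmod : P % p ^ k = P' % p ^ k :=
      modEq_of_pow_dvd_s_prime_mul hp hP hP' hPm hPm' hpm hs hs'
    rw [← Nat.div_add_mod P (p ^ k), ← Nat.div_add_mod P' (p ^ k), ht, ht', hmod]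

theorem countUpTo_hasUnitaryPrime_le (hp : p.Prime) (hV : 0 < V) (hW : 1 ≤ W) :
    countUpTo N (fun n ↦ p ^ (k + l) ∣ s n ∧ ¬ p ^ (l + 1) ∣ n ∧ HasUnitaryPrime g V W n) ≤
      N / (g * V) + N / (g * p ^ k) * (1 + Real.log W) := by
  have hp0 : (0 : ℝ) < p := mod_cast hp.pos
  set B : ℕ → ℕ → Prop := fun t n ↦ ∃ P m, P * m = n ∧ P.Prime ∧ ¬ P ∣ m ∧
    (if t = 0 then V else t * (p : ℝ) ^ k) ≤ P ∧ P / p ^ k = t ∧ g ∣ m ∧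
      ¬ p ^ (l + 1) ∣ n ∧ p ^ (k + l) ∣ s n
  calc countUpTo N (fun n ↦ p ^ (k + l) ∣ s n ∧ ¬ p ^ (l + 1) ∣ n ∧ HasUnitaryPrime g V W n)
      ≤ countUpTo N (fun n ↦ ∃ t ∈ range (⌊W⌋₊ + 1), B t n) := by
        refine countUpTo_mono fun n _ _ ⟨hs, hpn, P, m, hPm, hP, hndvd, hVP, hPW, hg⟩ ↦ ?_
        refine ⟨P / p ^ k, mem_range.2 (Nat.lt_succ_of_le ?_), P, m, hPm, hP, hndvd, ?_, rfl, hg,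
          hpn, hs⟩
        · exact (Nat.div_le_self _ _).trans (Nat.le_floor hPW)
        · split_ifs
          · exact hVP
          · exact_mod_cast Nat.div_mul_le_self P (p ^ k)
    _ ≤ ∑ t ∈ range (⌊W⌋₊ + 1), N / (g * (if t = 0 then V else t * (p : ℝ) ^ k)) := by
        refine (countUpTo_exists_mem_le _ _).trans (sum_le_sum fun t _ ↦
          countUpTo_unitaryPrime_block_le hp t ?_)
        split_ifs with ht
        · exact hV
        · have : 0 < t := Nat.pos_of_ne_zero ht
          positivity
    _ = N / (g * V) + N / (g * p ^ k) * harmonic ⌊W⌋₊ := by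
        rw [sum_range_succ', add_comm, harmonic, Rat.cast_sum, mul_sum]
        congr 1
        refine sum_congr rfl fun t _ ↦ ?_
        rw [if_neg t.succ_ne_zero]
        push_cast
        rw [div_mul_eq_div_div, div_mul_eq_div_div, div_mul_eq_div_div, div_mul_eq_mul_div]
        ring
    _ ≤ N / (g * V) + N / (g * p ^ k) * (1 + Real.log W) := by
        gcongr
        exact harmonic_floor_le_one_add_log W hW

end UnitaryPrime

section UnitaryDivisor

variable {N p k : ℕ} {V Y : ℝ}

theorem sigma1_mul_lt_of_le {a b M : ℕ} (ha : 1 ≤ a) (haY : a ≤ Y) (hbY : b ≤ Y)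
    (hY : Y ^ 2 * (1 + Real.log Y) < M) : sigma1 a * b < M := by
  have ha1 : (1 : ℝ) ≤ a := mod_cast ha
  have hY1 : 1 ≤ Y := ha1.trans haY
  have hlogY : 0 ≤ Real.log Y := Real.log_nonneg hY1
  have hreal : (sigma1 a : ℝ) * b < M := by
    calc (sigma1 a : ℝ) * b ≤ a * (1 + Real.log a) * b := by
          gcongr
          exact sigma1_le_mul_one_add_log a
      _ ≤ Y * (1 + Real.log Y) * Y := by gcongr
      _ < M := by linarith
  exact_mod_cast hreal

theorem eq_of_pow_dvd_s_mul {e e' m : ℕ} (hp : p.Prime) (hpm : ¬ p ∣ m)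
    (hY : Y ^ 2 * (1 + Real.log Y) < p ^ k)
    (hem : e.Coprime m) (he : Squarefree e) (hodd : Odd e) (heY : e ≤ Y) (hs : p ^ k ∣ s (e * m))
    (hem' : e'.Coprime m) (he' : Squarefree e') (hodd' : Odd e') (heY' : e' ≤ Y)
    (hs' : p ^ k ∣ s (e' * m)) : e = e' := by
  have hsigma : ∀ a : ℕ, a.Coprime m → (s (a * m) : ℤ) = sigma1 a * sigma1 m - a * m := by
    intro a ham
    rw [eq_sub_iff_add_eq]
    exact_mod_cast (s_add_self (a * m)).trans (sigma1_mul ham)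
  have hdvd : (p : ℤ) ^ k ∣ ((sigma1 e * e' : ℤ) - sigma1 e' * e) * m := by
    have := dvd_sub ((Int.natCast_dvd_natCast.2 hs).mul_left (sigma1 e'))
      ((Int.natCast_dvd_natCast.2 hs').mul_left (sigma1 e))
    rw [hsigma e hem, hsigma e' hem'] at this
    push_cast at this
    exact this.trans (dvd_of_eq (by ring))
  have hdvd' : (p : ℤ) ^ k ∣ sigma1 e * e' - sigma1 e' * e :=
    (Nat.prime_iff_prime_int.1 hp).pow_dvd_of_dvd_mul_right k (mod_cast hpm) hdvd
  have hmod : sigma1 e' * e ≡ sigma1 e * e' [MOD p ^ k] := by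
    rw [Nat.modEq_iff_dvd]
    exact_mod_cast hdvd'
  have hlt : sigma1 e * e' < p ^ k := sigma1_mul_lt_of_le hodd.pos heY heY' (mod_cast hY)
  have hlt' : sigma1 e' * e < p ^ k := sigma1_mul_lt_of_le hodd'.pos heY' heY (mod_cast hY)
  exact eq_of_sigma1_mul_eq he hodd he' hodd' (hmod.eq_of_lt_of_lt hlt' hlt).symm

/-- The number `n` has an odd squarefree unitary divisor `e` in `[V, Y]`, where unitary means that
`e` is coprime to the complementary divisor. Such `e` are determined by `σ(e) / e`. -/
def HasOddSquarefreeUnitaryDivisor (V Y : ℝ) (n : ℕ) : Prop :=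
  ∃ e m : ℕ, e * m = n ∧ e.Coprime m ∧ Squarefree e ∧ Odd e ∧ V ≤ e ∧ e ≤ Y

theorem countUpTo_hasOddSquarefreeUnitaryDivisor_le (hp : p.Prime) (hV : 0 < V)
    (hY : Y ^ 2 * (1 + Real.log Y) < p ^ k) :
    countUpTo N (fun n ↦ p ^ k ∣ s n ∧ ¬ p ∣ n ∧ HasOddSquarefreeUnitaryDivisor V Y n) ≤
      N / V := by
  rw [← one_mul V, ← Nat.cast_one (R := ℝ)]
  refine le_trans (countUpTo_mono ?_) (countUpTo_exists_mul_le hV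
    (R := fun e m ↦ e.Coprime m ∧ Squarefree e ∧ Odd e ∧ V ≤ e ∧ e ≤ Y ∧ ¬ p ∣ m ∧
      p ^ k ∣ s (e * m)) ?_ ?_)
  · rintro _ - - ⟨hs, hpn, e, m, rfl, hem, he, hodd, hVe, heY⟩
    exact ⟨e, m, rfl, hem, he, hodd, by simpa using hVe, heY, fun h ↦ hpn (h.mul_left e), hs⟩
  · rintro e m ⟨-, -, -, hVe, -⟩
    exact ⟨hVe, one_dvd m⟩
  · rintro e e' m ⟨hem, he, hodd, -, heY, hpm, hs⟩ ⟨hem', he', hodd', -, heY', -, hs'⟩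
    exact eq_of_pow_dvd_s_mul hp hpm hY hem he hodd heY hs hem' he' hodd' heY' hs'

end UnitaryDivisor

section Classification

variable {n ξ : ℕ}

theorem hasUnitaryPrime_of_mul_dvd {P g : ℕ} {V W : ℝ} (hP : P.Prime) (hPg : P * g ∣ n)
    (hsq : ¬ P ^ 2 ∣ n) (hV : V ≤ P) (hW : P ≤ W) : HasUnitaryPrime g V W n := by
  obtain ⟨c, rfl⟩ := hPg
  refine ⟨P, g * c, (mul_assoc P g c).symm, hP, fun hdvd ↦ hsq ?_, hV, hW, dvd_mul_right g c⟩
  rw [mul_assoc, sq]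
  exact mul_dvd_mul_left P hdvd

theorem hasOddSquarefreeUnitaryDivisor_prod {T : Finset ℕ} {V Y : ℝ} (hn : n ≠ 0) (hξ : 2 ≤ ξ)
    (hsq : ∀ r > ξ, ¬ r ^ 2 ∣ n) (hT : ∀ r ∈ T, ξ < r ∧ r.Prime ∧ r ∣ n)
    (hV : V ≤ ∏ r ∈ T, (r : ℝ)) (hY : ∏ r ∈ T, (r : ℝ) ≤ Y) :
    HasOddSquarefreeUnitaryDivisor V Y n := by
  obtain ⟨m, rfl⟩ : ∏ r ∈ T, r ∣ n :=
    prod_primes_dvd n (fun r hr ↦ (hT r hr).2.1.prime) (fun r hr ↦ (hT r hr).2.2)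
  refine ⟨∏ r ∈ T, r, m, rfl, Nat.Coprime.prod_left fun r hr ↦ ?_, ?_, ?_,
    by simpa using hV, by simpa using hY⟩
  · refine (hT r hr).2.1.coprime_iff_not_dvd.2 fun hrm ↦ hsq r (hT r hr).1 ?_
    rw [sq]
    exact mul_dvd_mul (dvd_prod_of_mem _ hr) hrm
  · refine squarefree_prod_of_pairwise_isCoprime (fun p hp q hq hpq ↦ ?_)
      fun p hp ↦ (hT p hp).2.1.prime.squarefree
    exact Nat.coprime_iff_isRelPrime.1
      ((Nat.coprime_primes (hT p hp).2.1 (hT q hq).2.1).2 hpq)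
  · rw [Nat.odd_iff, ← Nat.not_even_iff, even_iff_two_dvd,
      Nat.prime_two.prime.dvd_finsetProd_iff]
    rintro ⟨r, hr, htwo⟩
    have hr2 := (Nat.prime_dvd_prime_iff_eq Nat.prime_two (hT r hr).2.1).1 htwo
    exact absurd (hT r hr).1 (by lia)

theorem exists_subset_prod_between {ι : Type*} {S : Finset ι} {f : ι → ℝ} {V z : ℝ}
    (hf : ∀ i ∈ S, 0 ≤ f i) (hfz : ∀ i ∈ S, f i ≤ z) (hV : 1 < V) (hprod : V ≤ ∏ i ∈ S, f i) :
    ∃ T ⊆ S, V ≤ ∏ i ∈ T, f i ∧ ∏ i ∈ T, f i ≤ V * z := by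
  induction S using Finset.induction_on with
  | empty => exact absurd hprod (by simpa using hV)
  | insert a S ha ih =>
    rw [forall_mem_insert] at hf hfz
    by_cases hS : V ≤ ∏ i ∈ S, f i
    · obtain ⟨T, hTS, hT⟩ := ih hf.2 hfz.2 hS
      exact ⟨T, hTS.trans (subset_insert a S), hT⟩
    · refine ⟨insert a S, subset_rfl, hprod, ?_⟩
      rw [prod_insert ha, mul_comm]
      exact mul_le_mul (not_le.1 hS).le hfz.1 hf.1 (by linarith)

theorem le_mul_prod_primeFactors_gt (hn : n ≠ 0) (hsq : ∀ r > ξ, ¬ r ^ 2 ∣ n) :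
    n ≤ ξ ^ 2 * 4 ^ ξ * ∏ r ∈ n.primeFactors with ξ < r, r := by
  obtain ⟨a, b, -, -, hab, ha⟩ := Nat.sq_mul_squarefree_of_pos (Nat.pos_of_ne_zero hn)
  have hbξ : b ≤ ξ := by
    by_contra! hb
    exact hsq b hb ⟨a, hab.symm⟩
  have hsmall : ∏ r ∈ a.primeFactors with ¬ ξ < r, r ≤ 4 ^ ξ := by
    refine le_trans ?_ (primorial_le_four_pow ξ)
    rw [primorial_eq_prod_primesLE]
    refine prod_le_prod_of_subset_of_one_le' (fun r hr ↦ ?_)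
      fun r hr _ ↦ (Nat.mem_primesLE.1 hr).2.one_le
    obtain ⟨hra, hrξ⟩ := mem_filter.1 hr
    exact Nat.mem_primesLE.2 ⟨not_lt.1 hrξ, Nat.prime_of_mem_primeFactors hra⟩
  have hlarge : ∏ r ∈ a.primeFactors with ξ < r, r ≤ ∏ r ∈ n.primeFactors with ξ < r, r := by
    refine prod_le_prod_of_subset_of_one_le' (filter_subset_filter _
      (Nat.primeFactors_mono ⟨b ^ 2, by rw [← hab, mul_comm]⟩ hn)) fun r hr _ ↦ ?_
    exact (Nat.prime_of_mem_primeFactors (mem_filter.1 hr).1).one_le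
  calc n = b ^ 2 * ∏ r ∈ a.primeFactors, r := by
        rw [Nat.prod_primeFactors_of_squarefree ha, hab]
    _ = b ^ 2 * ((∏ r ∈ a.primeFactors with ¬ ξ < r, r) *
          ∏ r ∈ a.primeFactors with ξ < r, r) := by
        rw [mul_comm (∏ r ∈ _ with ¬ _, r), prod_filter_mul_prod_filter_not]
    _ ≤ ξ ^ 2 * (4 ^ ξ * ∏ r ∈ n.primeFactors with ξ < r, r) := by gcongr
    _ = ξ ^ 2 * 4 ^ ξ * ∏ r ∈ n.primeFactors with ξ < r, r := by ring

/-- The properties of almost all `n ≤ N` that the argument relies on; `ξ` is the threshold beyond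
which primes count as large, and `α < β` are small exponents. -/
structure IsTypical (N ξ : ℕ) (α β ε : ℝ) (n : ℕ) : Prop where
  lt : ε * N < n
  not_sq_dvd : ∀ r > ξ, ¬ r ^ 2 ∣ n
  hasPrimeFactorInWindow : ∀ p > ξ, (p : ℝ) ≤ Real.log N → HasPrimeFactorInWindow p n
  hasTwoPrimeFactors_large : HasTwoPrimeFactorsIoc (N ^ β) N n
  hasTwoPrimeFactors_medium : HasTwoPrimeFactorsIoc (N ^ α) (N ^ (β / 4)) n

theorem countUpTo_natCast_le_le (N : ℕ) {a : ℝ} (ha : 0 ≤ a) :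
    countUpTo N (fun n ↦ (n : ℝ) ≤ a) ≤ a := by
  calc countUpTo N (fun n ↦ (n : ℝ) ≤ a) ≤ #(Icc 1 ⌊a⌋₊) := by
        refine Nat.cast_le.2 (card_le_card fun n hn ↦ ?_)
        obtain ⟨hnN, hna⟩ := mem_filter.1 hn
        exact mem_Icc.2 ⟨(mem_Icc.1 hnN).1, Nat.le_floor hna⟩
    _ ≤ a := by rw [Nat.card_Icc, Nat.add_sub_cancel]; exact Nat.floor_le ha

theorem exists_eventually_countUpTo_not_isTypical_le {ε : ℝ} (hε : 0 < ε) :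
    ∃ α β, 0 < α ∧ α ≤ β ∧ ∀ᶠ ξ : ℕ in atTop, ∀ᶠ N : ℕ in atTop,
      countUpTo N (fun n ↦ ¬ IsTypical N ξ α β ε n) ≤ 5 * (ε * N) := by
  obtain ⟨β, hβ, hβ1, hlarge⟩ :=
    exists_eventually_countUpTo_not_hasTwoPrimeFactorsIoc_le hε one_pos le_rfl
  obtain ⟨α, hα, hαβ, hmedium⟩ :=
    exists_eventually_countUpTo_not_hasTwoPrimeFactorsIoc_le (β := β / 4) hε (by positivity)
      (by linarith)
  refine ⟨α, β, hα, by linarith, ?_⟩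
  filter_upwards [eventually_mul_two_div_add_one_le hε 1,
    eventually_countUpTo_not_hasPrimeFactorInWindow_le hε] with ξ hsq hwindow
  filter_upwards [hlarge, hmedium] with N hlarge hmedium
  rw [one_mul] at hsq
  simp only [Real.rpow_one] at hlarge
  have hsquare : countUpTo N (fun n ↦ ∃ r > ξ, r ^ 2 ∣ n) ≤ ε * N :=
    (countUpTo_exists_sq_dvd_le N ξ).trans (by rw [mul_comm]; gcongr)
  calc countUpTo N (fun n ↦ ¬ IsTypical N ξ α β ε n)
      ≤ countUpTo N (fun n ↦ (n : ℝ) ≤ ε * N ∨ (∃ r > ξ, r ^ 2 ∣ n) ∨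
          (∃ p > ξ, (p : ℝ) ≤ Real.log N ∧ ¬ HasPrimeFactorInWindow p n) ∨
          ¬ HasTwoPrimeFactorsIoc (N ^ β) N n ∨
          ¬ HasTwoPrimeFactorsIoc (N ^ α) (N ^ (β / 4)) n) := by
        refine countUpTo_mono fun n _ _ hn ↦ ?_
        contrapose! hn
        exact ⟨hn.1, hn.2.1, hn.2.2.1, hn.2.2.2.1, hn.2.2.2.2⟩
    _ ≤ ε * N + (ε * N + (ε * N + (ε * N + ε * N))) :=
        countUpTo_or_le.trans (add_le_add (countUpTo_natCast_le_le N (by positivity)) <|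
          countUpTo_or_le.trans <| add_le_add hsquare <|
          countUpTo_or_le.trans <| add_le_add (hwindow N) <|
          countUpTo_or_le.trans <| add_le_add hlarge hmedium)
    _ = 5 * (ε * N) := by ring

end Classification

section Trichotomy

variable {N ξ n p : ℕ} {α β ε η : ℝ}

theorem exists_prime_of_hasTwoPrimeFactorsIoc {A B : ℝ} (h : HasTwoPrimeFactorsIoc A B n) (q : ℕ) :
    ∃ P : ℕ, P.Prime ∧ P ∣ n ∧ P ≠ q ∧ A < P ∧ P ≤ B := by
  obtain ⟨P, hP, hPq⟩ := exists_mem_ne h q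
  obtain ⟨hPn, hPA, hPB⟩ := mem_filter.1 hP
  exact ⟨P, Nat.prime_of_mem_primeFactors hPn, Nat.dvd_of_mem_primeFactors hPn, hPq, hPA, hPB⟩

namespace IsTypical

theorem ne_zero (hn : IsTypical N ξ α β ε n) (hε : 0 ≤ ε) : n ≠ 0 := by
  have : (0 : ℝ) < n := lt_of_le_of_lt (by positivity) hn.lt
  exact_mod_cast this.ne'

theorem hasUnitaryPrime_window (hn : IsTypical N ξ α β ε n) (hξp : ξ < p)
    (hpN : p ≤ Real.log N) : HasUnitaryPrime 1 (p ^ 2) (Real.exp √p) n := by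
  obtain ⟨P, hP, hPn, hpP, hPexp⟩ := hn.hasPrimeFactorInWindow p hξp hpN
  have hξP : ξ < P := hξp.trans_le ((Nat.le_self_pow two_ne_zero p).trans hpP)
  exact hasUnitaryPrime_of_mul_dvd hP (by rwa [mul_one]) (hn.not_sq_dvd P hξP) (mod_cast hpP) hPexp

theorem hasUnitaryPrime_of_dvd (hn : IsTypical N ξ α β ε n) (hp : p.Prime) (hξ : ξ ≤ (N : ℝ) ^ β)
    (hpn : p ∣ n) : HasUnitaryPrime p (N ^ β) N n := by
  obtain ⟨P, hP, hPn, hPp, hβP, hPN⟩ :=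
    exists_prime_of_hasTwoPrimeFactorsIoc hn.hasTwoPrimeFactors_large p
  have hξP : ξ < P := by exact_mod_cast hξ.trans_lt hβP
  have hcop : P.Coprime p := (Nat.coprime_primes hP hp).2 hPp
  exact hasUnitaryPrime_of_mul_dvd hP (hcop.mul_dvd_of_dvd_of_dvd hPn hpn)
    (hn.not_sq_dvd P hξP) hβP.le hPN

theorem hasOddSquarefreeUnitaryDivisor_of_large_prime {P : ℕ} (hn : IsTypical N ξ α β ε n)
    (hε : 0 ≤ ε) (hξ : 2 ≤ ξ) (hp : 1 < p) (hpN : p ≤ N) (hα : 0 ≤ α) (hη : 4 * η ≤ α)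
    (hη1 : η ≤ 1 / 10) (hξN : ξ ≤ (N : ℝ) ^ α) (hβp : (N : ℝ) ^ β ≤ p ^ 2) (hξP : ξ < P)
    (hP : P.Prime) (hPn : P ∣ n) (hpP : (p : ℝ) ^ (1 - 3 * η) < P) (hPp : P ≤ (p : ℝ) ^ (1 + η)) :
    HasOddSquarefreeUnitaryDivisor (p ^ (1 + η)) (p ^ (2 - 2 * η)) n := by
  have hp1 : (1 : ℝ) < p := mod_cast hp
  have hp0 : (0 : ℝ) < p := by linarith
  have hpN' : (p : ℝ) ≤ N := mod_cast hpN
  have hN1 : (1 : ℝ) ≤ N := hp1.le.trans hpN'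
  obtain ⟨r, hr, hrn, hrP, hαr, hrβ⟩ :=
    exists_prime_of_hasTwoPrimeFactorsIoc hn.hasTwoPrimeFactors_medium P
  have hξr : ξ < r := by exact_mod_cast hξN.trans_lt hαr
  have hpr : (p : ℝ) ^ (4 * η) ≤ r := by
    calc (p : ℝ) ^ (4 * η) ≤ p ^ α := Real.rpow_le_rpow_of_exponent_le hp1.le hη
      _ ≤ N ^ α := by gcongr
      _ ≤ r := hαr.le
  have hrp : r ≤ (p : ℝ) ^ (1 / 2 : ℝ) := by
    calc (r : ℝ) ≤ N ^ (β / 4) := hrβ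
      _ = (N ^ β) ^ (1 / 4 : ℝ) := by rw [← Real.rpow_mul (by positivity)]; ring_nf
      _ ≤ ((p : ℝ) ^ 2) ^ (1 / 4 : ℝ) := by gcongr
      _ = p ^ (1 / 2 : ℝ) := by rw [← Real.rpow_natCast_mul hp0.le]; norm_num
  have hprod : ∏ q ∈ {P, r}, (q : ℝ) = P * r := prod_pair hrP.symm
  refine hasOddSquarefreeUnitaryDivisor_prod (T := {P, r}) (hn.ne_zero hε) hξ hn.not_sq_dvd ?_ ?_ ?_
  · simp only [mem_insert, mem_singleton]
    rintro q (rfl | rfl)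
    exacts [⟨hξP, hP, hPn⟩, ⟨hξr, hr, hrn⟩]
  · rw [hprod]
    calc (p : ℝ) ^ (1 + η) = p ^ (1 - 3 * η) * p ^ (4 * η) := by
          rw [← Real.rpow_add hp0]; ring_nf
      _ ≤ P * r := by gcongr
  · rw [hprod]
    calc (P : ℝ) * r ≤ p ^ (1 + η) * p ^ (1 / 2 : ℝ) := by gcongr
      _ = p ^ (1 + η + 1 / 2) := (Real.rpow_add hp0 _ _).symm
      _ ≤ p ^ (2 - 2 * η) := Real.rpow_le_rpow_of_exponent_le hp1.le (by linarith)

theorem hasOddSquarefreeUnitaryDivisor_of_forall_le {V z : ℝ} (hn : IsTypical N ξ α β ε n)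
    (hε : 0 ≤ ε) (hξ : 2 ≤ ξ) (hV : 1 < V) (hVN : V * (ξ ^ 2 * 4 ^ ξ) ≤ ε * N)
    (hz : ∀ P > ξ, P.Prime → P ∣ n → (P : ℝ) ≤ z) :
    HasOddSquarefreeUnitaryDivisor V (V * z) n := by
  have hlarge : ∀ r ∈ n.primeFactors.filter (ξ < ·), ξ < r ∧ r.Prime ∧ r ∣ n := fun r hr ↦
    ⟨(mem_filter.1 hr).2, Nat.prime_of_mem_primeFactors (mem_filter.1 hr).1,
      Nat.dvd_of_mem_primeFactors (mem_filter.1 hr).1⟩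
  have hprod : V ≤ ∏ r ∈ n.primeFactors with ξ < r, (r : ℝ) := by
    have hξ0 : (0 : ℝ) < ξ ^ 2 * 4 ^ ξ := by
      have : 0 < ξ := by lia
      positivity
    have hle : (n : ℝ) ≤ ξ ^ 2 * 4 ^ ξ * ∏ r ∈ n.primeFactors with ξ < r, (r : ℝ) := by
      have := (Nat.cast_le (α := ℝ)).2 (le_mul_prod_primeFactors_gt (hn.ne_zero hε) hn.not_sq_dvd)
      push_cast at this
      exact this
    refine le_of_mul_le_mul_left ?_ hξ0
    linarith [hn.lt]
  obtain ⟨T, hTS, hVT, hTz⟩ := exists_subset_prod_between (fun r _ ↦ r.cast_nonneg)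
    (fun r hr ↦ hz r (hlarge r hr).1 (hlarge r hr).2.1 (hlarge r hr).2.2) hV hprod
  exact hasOddSquarefreeUnitaryDivisor_prod (hn.ne_zero hε) hξ hn.not_sq_dvd
    (fun r hr ↦ hlarge r (hTS hr)) hVT hTz

theorem hasOddSquarefreeUnitaryDivisor_of_forall_lt (hn : IsTypical N ξ α β ε n) (hε : 0 ≤ ε)
    (hξ : 2 ≤ ξ) (hp : 1 < p) (hpN : p ^ 2 ≤ N) (hα : 0 ≤ α) (hη0 : 0 < η) (hη : 4 * η ≤ α)
    (hη1 : η ≤ 1 / 10) (hξN : ξ ≤ (N : ℝ) ^ α)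
    (hN : (N : ℝ) ^ (3 / 4 : ℝ) * (ξ ^ 2 * 4 ^ ξ) ≤ ε * N)
    (hlt : ∀ P : ℕ, P.Prime → P ∣ n → (P : ℝ) < p ^ (1 + η)) :
    HasOddSquarefreeUnitaryDivisor (p ^ (1 + η)) (p ^ (2 - 2 * η)) n := by
  have hp1 : (1 : ℝ) < p := mod_cast hp
  have hpN' : p ≤ N := (Nat.le_self_pow two_ne_zero p).trans hpN
  by_cases! hlarge : ∃ P > ξ, P.Prime ∧ P ∣ n ∧ (p : ℝ) ^ (1 - 3 * η) < P
  · obtain ⟨P, hξP, hP, hPn, hpP⟩ := hlarge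
    have hβp : (N : ℝ) ^ β ≤ p ^ 2 := by
      obtain ⟨Q, hQ, hQn, -, hβQ, -⟩ :=
        exists_prime_of_hasTwoPrimeFactorsIoc hn.hasTwoPrimeFactors_large 0
      calc (N : ℝ) ^ β ≤ p ^ (1 + η) := hβQ.le.trans (hlt Q hQ hQn).le
        _ ≤ p ^ (2 : ℝ) := Real.rpow_le_rpow_of_exponent_le hp1.le (by linarith)
        _ = p ^ 2 := Real.rpow_two _
    exact hn.hasOddSquarefreeUnitaryDivisor_of_large_prime hε hξ hp hpN' hα hη hη1 hξN hβp
      hξP hP hPn hpP (hlt P hP hPn).le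
  · have hexp : (p : ℝ) ^ (1 + η) * p ^ (1 - 3 * η) = p ^ (2 - 2 * η) := by
      rw [← Real.rpow_add (by linarith)]
      ring_nf
    rw [← hexp]
    refine hn.hasOddSquarefreeUnitaryDivisor_of_forall_le hε hξ
      (Real.one_lt_rpow hp1 (by linarith)) (le_trans ?_ hN) hlarge
    gcongr
    calc (p : ℝ) ^ (1 + η) ≤ p ^ (2 * (3 / 4) : ℝ) :=
          Real.rpow_le_rpow_of_exponent_le hp1.le (by linarith)
      _ = ((p : ℝ) ^ 2) ^ (3 / 4 : ℝ) := by
          rw [Real.rpow_mul (by positivity), Real.rpow_two]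
      _ ≤ N ^ (3 / 4 : ℝ) := by gcongr; exact_mod_cast hpN

theorem hasUnitaryPrime_or_hasOddSquarefreeUnitaryDivisor (hn : IsTypical N ξ α β ε n)
    (hnN : n ≤ N) (hε : 0 ≤ ε) (hξ : 2 ≤ ξ) (hp : p.Prime) (hξp : ξ < p) (hpN : p ^ 2 ≤ N)
    (hα : 0 ≤ α) (hαβ : α ≤ β) (hη0 : 0 < η) (hη : 4 * η ≤ α) (hη1 : η ≤ 1 / 10)
    (hξN : ξ ≤ (N : ℝ) ^ α) (hN : (N : ℝ) ^ (3 / 4 : ℝ) * (ξ ^ 2 * 4 ^ ξ) ≤ ε * N) :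
    HasUnitaryPrime p (N ^ β) N n ∨ HasUnitaryPrime 1 (p ^ (1 + η)) N n ∨
      (¬ p ∣ n ∧ HasOddSquarefreeUnitaryDivisor (p ^ (1 + η)) (p ^ (2 - 2 * η)) n) := by
  have hp1 : (1 : ℝ) < p := mod_cast hp.one_lt
  have hN1 : (1 : ℝ) ≤ N := mod_cast hp.one_le.trans ((Nat.le_self_pow two_ne_zero p).trans hpN)
  have hξβ : ξ ≤ (N : ℝ) ^ β := hξN.trans (Real.rpow_le_rpow_of_exponent_le hN1 hαβ)
  by_cases hpn : p ∣ n
  · exact .inl (hn.hasUnitaryPrime_of_dvd hp hξβ hpn)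
  by_cases! hbig : ∃ P : ℕ, P.Prime ∧ P ∣ n ∧ (p : ℝ) ^ (1 + η) ≤ P
  · obtain ⟨P, hP, hPn, hpP⟩ := hbig
    have hξP : ξ < P := by
      have : (p : ℝ) ≤ P := (Real.self_le_rpow_of_one_le hp1.le (by linarith)).trans hpP
      exact hξp.trans_le (mod_cast this)
    exact .inr (.inl (hasUnitaryPrime_of_mul_dvd hP (by rwa [mul_one]) (hn.not_sq_dvd P hξP) hpP
      (mod_cast (Nat.le_of_dvd (Nat.pos_of_ne_zero (hn.ne_zero hε)) hPn).trans hnN)))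
  exact .inr (.inr ⟨hpn, hn.hasOddSquarefreeUnitaryDivisor_of_forall_lt hε hξ hp.one_lt hpN hα
    hη0 hη hη1 hξN hN hbig⟩)

end IsTypical

end Trichotomy

section DivisibilityCounts

variable {N ξ p : ℕ} {α β ε η : ℝ}

theorem countUpTo_hasUnitaryPrime_le_three_mul {g : ℕ} {D V W : ℝ} (hp : p.Prime) (hg : 0 < g)
    (hD : 0 < D) (hDp : D ≤ p ^ 2) (hDV : D ≤ g * V) (hW : 1 ≤ W) (hWp : Real.log W ≤ p) :
    countUpTo N (fun n ↦ p ^ 4 ∣ s n ∧ ¬ p ^ 2 ∣ n ∧ HasUnitaryPrime g V W n) ≤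
      3 * N * (1 / D) := by
  have hp1 : (1 : ℝ) ≤ p := mod_cast hp.one_le
  have hg1 : (1 : ℝ) ≤ g := mod_cast hg
  have hV : 0 < V := pos_of_mul_pos_right (hD.trans_le hDV) (by positivity)
  have : 0 ≤ 1 + Real.log W := by linarith [Real.log_nonneg hW]
  have hp3 : D * p ≤ g * p ^ 3 := by
    calc D * p ≤ p ^ 2 * p := by gcongr
      _ = 1 * p ^ 3 := by ring
      _ ≤ g * p ^ 3 := by gcongr
  calc countUpTo N (fun n ↦ p ^ 4 ∣ s n ∧ ¬ p ^ 2 ∣ n ∧ HasUnitaryPrime g V W n)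
      ≤ N / (g * V) + N / (g * p ^ 3) * (1 + Real.log W) := by
        simpa only [Nat.reduceAdd] using countUpTo_hasUnitaryPrime_le (k := 3) (l := 1) hp hV hW
    _ ≤ N / D + N / (D * p) * (2 * p) := by gcongr; linarith
    _ = 3 * N * (1 / D) := by field_simp; ring

theorem countUpTo_small_prime_le (hp : p.Prime) (hpξ : ξ < p) (hpN : p ≤ Real.log N) :
    countUpTo N (fun n ↦ IsTypical N ξ α β ε n ∧ p ^ 4 ∣ s n) ≤ 3 * N * (1 / (p : ℝ) ^ 2) := by
  have hp1 : (1 : ℝ) ≤ p := mod_cast hp.one_le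
  refine (countUpTo_mono fun n _ _ ⟨hn, hs⟩ ↦ ?_).trans
    (countUpTo_hasUnitaryPrime_le_three_mul (g := 1) (V := p ^ 2) (W := Real.exp √p) hp one_pos
      (by positivity) le_rfl (by simp) (Real.one_le_exp (Real.sqrt_nonneg _)) ?_)
  · rw [Real.log_exp]
    exact Real.sqrt_le_iff.2 ⟨by linarith, by nlinarith⟩
  · exact ⟨hs, hn.not_sq_dvd p hpξ, hn.hasUnitaryPrime_window hpξ hpN⟩

theorem countUpTo_hasOddSquarefreeUnitaryDivisor_rpow_le (hp : p.Prime) (hη : 0 ≤ η)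
    (hlog : 1 + 2 * Real.log p < (p : ℝ) ^ (4 * η)) :
    countUpTo N (fun n ↦ p ^ 4 ∣ s n ∧ ¬ p ∣ n ∧
      HasOddSquarefreeUnitaryDivisor (p ^ (1 + η)) (p ^ (2 - 2 * η)) n) ≤
        N * (1 / (p : ℝ) ^ (1 + η)) := by
  have hp0 : (0 : ℝ) < p := mod_cast hp.pos
  have : 0 ≤ Real.log p := Real.log_natCast_nonneg p
  rw [mul_one_div]
  refine countUpTo_hasOddSquarefreeUnitaryDivisor_le hp (by positivity) ?_
  calc ((p : ℝ) ^ (2 - 2 * η)) ^ 2 * (1 + Real.log (p ^ (2 - 2 * η)))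
      = (p : ℝ) ^ (4 - 4 * η) * (1 + (2 - 2 * η) * Real.log p) := by
        rw [Real.log_rpow hp0, ← Real.rpow_mul_natCast hp0.le]
        push_cast
        ring_nf
    _ ≤ (p : ℝ) ^ (4 - 4 * η) * (1 + 2 * Real.log p) := by gcongr; linarith
    _ < (p : ℝ) ^ (4 - 4 * η) * p ^ (4 * η) := by gcongr
    _ = p ^ 4 := by
      rw [← Real.rpow_add hp0, sub_add_cancel]
      exact_mod_cast Real.rpow_natCast (p : ℝ) 4

theorem countUpTo_large_prime_le (hp : p.Prime) (hε : 0 ≤ ε) (hξ : 2 ≤ ξ) (hξp : ξ < p)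
    (hpN : p ^ 2 ≤ N) (hlogN : Real.log N ≤ p) (hlog : 1 + 2 * Real.log p < (p : ℝ) ^ (4 * η))
    (hα : 0 ≤ α) (hαβ : α ≤ β) (hη0 : 0 < η) (hη : 4 * η ≤ α) (hη1 : η ≤ 1 / 10)
    (hξN : ξ ≤ (N : ℝ) ^ α) (hN : (N : ℝ) ^ (3 / 4 : ℝ) * (ξ ^ 2 * 4 ^ ξ) ≤ ε * N) :
    countUpTo N (fun n ↦ IsTypical N ξ α β ε n ∧ p ^ 4 ∣ s n) ≤
      7 * N * (1 / (p : ℝ) ^ (1 + η)) := by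
  have hp1 : (1 : ℝ) < p := mod_cast hp.one_lt
  have hpN' : (p : ℝ) ≤ N := mod_cast (Nat.le_self_pow two_ne_zero p).trans hpN
  have hN1 : (1 : ℝ) ≤ N := hp1.le.trans hpN'
  have hD : (p : ℝ) ^ (1 + η) ≤ p ^ 2 := by
    rw [← Real.rpow_two]
    exact Real.rpow_le_rpow_of_exponent_le hp1.le (by linarith)
  have hDV : (p : ℝ) ^ (1 + η) ≤ p * (N : ℝ) ^ β := by
    rw [Real.rpow_one_add' (by positivity) (by linarith)]
    gcongr
    exact (Real.rpow_le_rpow (by positivity) hpN' hη0.le).trans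
      (Real.rpow_le_rpow_of_exponent_le hN1 (by linarith))
  calc countUpTo N (fun n ↦ IsTypical N ξ α β ε n ∧ p ^ 4 ∣ s n)
      ≤ countUpTo N (fun n ↦
          (p ^ 4 ∣ s n ∧ ¬ p ^ 2 ∣ n ∧ HasUnitaryPrime p (N ^ β) N n) ∨
          (p ^ 4 ∣ s n ∧ ¬ p ^ 2 ∣ n ∧ HasUnitaryPrime 1 (p ^ (1 + η)) N n) ∨
          (p ^ 4 ∣ s n ∧ ¬ p ∣ n ∧
            HasOddSquarefreeUnitaryDivisor (p ^ (1 + η)) (p ^ (2 - 2 * η)) n)) := by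
        refine countUpTo_mono fun n _ hnN ⟨hn, hs⟩ ↦ ?_
        have hpn := hn.not_sq_dvd p hξp
        exact (hn.hasUnitaryPrime_or_hasOddSquarefreeUnitaryDivisor hnN hε hξ hp hξp hpN hα hαβ
          hη0 hη hη1 hξN hN).imp (⟨hs, hpn, ·⟩) (Or.imp (⟨hs, hpn, ·⟩) (⟨hs, ·⟩))
    _ ≤ 3 * N * (1 / (p : ℝ) ^ (1 + η)) +
          (3 * N * (1 / (p : ℝ) ^ (1 + η)) + N * (1 / (p : ℝ) ^ (1 + η))) :=
        countUpTo_or_le.trans <| add_le_add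
          (countUpTo_hasUnitaryPrime_le_three_mul hp hp.pos (by positivity) hD hDV hN1 hlogN) <|
          countUpTo_or_le.trans <| add_le_add
            (countUpTo_hasUnitaryPrime_le_three_mul hp one_pos (by positivity) hD (by simp) hN1
              hlogN)
            (countUpTo_hasOddSquarefreeUnitaryDivisor_rpow_le hp hη0.le hlog)
    _ = 7 * N * (1 / (p : ℝ) ^ (1 + η)) := by ring

theorem sq_le_of_pow_four_dvd_s {n : ℕ} (hn : 2 ≤ n) (hs : p ^ 4 ∣ s n) : p ^ 2 ≤ n := by
  refine (Nat.pow_le_pow_iff_left two_ne_zero).1 ?_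
  rw [← pow_mul]
  exact (Nat.le_of_dvd (s_pos hn) hs).trans (s_le_sq n)

theorem eventually_forall_sum_one_div_rpow_le (hη : 0 < η) (hε : 0 < ε) :
    ∀ᶠ M : ℕ in atTop, ∀ S : Finset ℕ, (∀ p ∈ S, M < p) →
      ∑ p ∈ S, 1 / (p : ℝ) ^ (1 + η) ≤ ε := by
  have hsummable : Summable fun p : ℕ ↦ 1 / (p : ℝ) ^ (1 + η) :=
    Real.summable_one_div_nat_rpow.2 (by linarith)
  obtain ⟨T, hT⟩ := summable_iff_vanishing.1 hsummable _ (Metric.ball_mem_nhds 0 hε)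
  filter_upwards [eventually_ge_atTop (T.sup id)] with M hM S hS
  have hdisj : Disjoint S T := disjoint_left.2 fun p hpS hpT ↦
    (hS p hpS).not_ge ((le_sup (f := id) hpT).trans hM)
  have := hT S hdisj
  rw [mem_ball_zero_iff] at this
  exact (Real.le_norm_self _).trans this.le

theorem eventually_one_add_two_mul_log_lt_rpow {δ : ℝ} (hδ : 0 < δ) :
    ∀ᶠ p : ℕ in atTop, 1 + 2 * Real.log p < (p : ℝ) ^ δ := by
  have hlog : (fun x : ℝ ↦ 1 + 2 * Real.log x) =o[atTop] fun x ↦ x ^ δ :=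
    (Asymptotics.isLittleO_const_left.2
      (.inr (tendsto_norm_atTop_atTop.comp (tendsto_rpow_atTop hδ)))).add
        ((isLittleO_log_rpow_atTop hδ).const_mul_left 2)
  filter_upwards [tendsto_natCast_atTop_atTop.eventually (hlog.def (half_pos one_pos)),
    eventually_ge_atTop 1] with p hp hp1
  have hp0 : (0 : ℝ) < p := mod_cast hp1
  have hpow : (0 : ℝ) < (p : ℝ) ^ δ := by positivity
  rw [Real.norm_of_nonneg hpow.le] at hp
  linarith [(Real.le_norm_self _).trans hp]

end DivisibilityCounts

section Density

variable {ξ : ℕ} {α β ε : ℝ}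

theorem eventually_countUpTo_small_primes_le (hε : 0 < ε) (α β : ℝ) :
    ∀ᶠ ξ : ℕ in atTop, ∀ N : ℕ, countUpTo N (fun n ↦ ∃ p > ξ, p.Prime ∧ (p : ℝ) ≤ Real.log N ∧
      IsTypical N ξ α β ε n ∧ p ^ 4 ∣ s n) ≤ 3 * (ε * N) := by
  filter_upwards [eventually_mul_two_div_add_one_le hε 1] with ξ hξ N
  set S : Finset ℕ := {p ∈ Ioo ξ (N + 1) | p.Prime ∧ (p : ℝ) ≤ Real.log N}
  calc countUpTo N (fun n ↦ ∃ p > ξ, p.Prime ∧ (p : ℝ) ≤ Real.log N ∧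
        IsTypical N ξ α β ε n ∧ p ^ 4 ∣ s n)
      ≤ countUpTo N (fun n ↦ ∃ p ∈ S, IsTypical N ξ α β ε n ∧ p ^ 4 ∣ s n) := by
        refine countUpTo_mono fun n _ _ ⟨p, hξp, hp, hpN, hn⟩ ↦
          ⟨p, mem_filter.2 ⟨mem_Ioo.2 ⟨hξp, Nat.lt_succ_of_le ?_⟩, hp, hpN⟩, hn⟩
        exact_mod_cast hpN.trans (Real.log_le_self N.cast_nonneg)
    _ ≤ ∑ p ∈ S, 3 * N * (1 / (p : ℝ) ^ 2) := by
        refine (countUpTo_exists_mem_le _ _).trans (sum_le_sum fun p hp ↦ ?_)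
        obtain ⟨hpξ, hp, hpN⟩ := mem_filter.1 hp
        exact countUpTo_small_prime_le hp (mem_Ioo.1 hpξ).1 hpN
    _ ≤ ∑ p ∈ Ioo ξ (N + 1), 3 * N * (1 / (p : ℝ) ^ 2) :=
        sum_le_sum_of_subset_of_nonneg (filter_subset _ _) fun p _ _ ↦ by positivity
    _ = 3 * N * ∑ p ∈ Ioo ξ (N + 1), ((p : ℝ) ^ 2)⁻¹ := by simp only [mul_sum, one_div]
    _ ≤ 3 * N * (2 / (ξ + 1)) := by gcongr; exact sum_Ioo_inv_sq_le ξ (N + 1)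
    _ = 3 * (1 * (2 / (ξ + 1)) * N) := by ring
    _ ≤ 3 * (ε * N) := by gcongr

theorem eventually_rpow_mul_le (hε : 0 < ε) (C : ℝ) :
    ∀ᶠ N : ℕ in atTop, (N : ℝ) ^ (3 / 4 : ℝ) * C ≤ ε * N := by
  have hroot : Tendsto (fun N : ℕ ↦ (N : ℝ) ^ (1 / 4 : ℝ)) atTop atTop :=
    (tendsto_rpow_atTop (by norm_num)).comp tendsto_natCast_atTop_atTop
  filter_upwards [hroot.eventually_ge_atTop (C / ε), eventually_gt_atTop 0] with N hN hN0
  calc (N : ℝ) ^ (3 / 4 : ℝ) * C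
      ≤ (N : ℝ) ^ (3 / 4 : ℝ) * ((N : ℝ) ^ (1 / 4 : ℝ) * ε) := by
        gcongr
        exact (div_le_iff₀ hε).1 hN
    _ = ε * (N : ℝ) ^ (3 / 4 + 1 / 4 : ℝ) := by
        rw [Real.rpow_add (by exact_mod_cast hN0)]
        ring
    _ = ε * N := by norm_num

theorem eventually_countUpTo_large_primes_le (hε : 0 < ε) (hα : 0 < α) (hαβ : α ≤ β)
    (hξ : 2 ≤ ξ) :
    ∀ᶠ N : ℕ in atTop, countUpTo N (fun n ↦ ∃ p > ξ, p.Prime ∧ Real.log N < p ∧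
      IsTypical N ξ α β ε n ∧ p ^ 4 ∣ s n) ≤ 7 * (ε * N) := by
  obtain ⟨η, hη0, hη⟩ := exists_between (show 0 < min (α / 4) (1 / 10) by positivity)
  obtain ⟨hηα, hη1⟩ := lt_min_iff.1 hη
  have hfloor : Tendsto (fun N : ℕ ↦ ⌊Real.log N⌋₊) atTop atTop :=
    tendsto_nat_floor_atTop.comp (Real.tendsto_log_atTop.comp tendsto_natCast_atTop_atTop)
  have hrpow : Tendsto (fun N : ℕ ↦ (N : ℝ) ^ α) atTop atTop :=
    (tendsto_rpow_atTop hα).comp tendsto_natCast_atTop_atTop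
  filter_upwards [hfloor.eventually (eventually_forall_sum_one_div_rpow_le hη0 hε),
    hfloor.eventually (eventually_forall_ge_atTop.2
      (eventually_one_add_two_mul_log_lt_rpow (δ := 4 * η) (by positivity))),
    hrpow.eventually_ge_atTop (ξ : ℝ), eventually_rpow_mul_le hε (ξ ^ 2 * 4 ^ ξ),
    (tendsto_natCast_atTop_atTop.const_mul_atTop hε).eventually_ge_atTop 1]
    with N htail hlog hξN hN hεN
  set S : Finset ℕ := {p ∈ Ioc ⌊Real.log N⌋₊ N | ξ < p ∧ p.Prime ∧ p ^ 2 ≤ N}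
  calc countUpTo N (fun n ↦ ∃ p > ξ, p.Prime ∧ Real.log N < p ∧
        IsTypical N ξ α β ε n ∧ p ^ 4 ∣ s n)
      ≤ countUpTo N (fun n ↦ ∃ p ∈ S, IsTypical N ξ α β ε n ∧ p ^ 4 ∣ s n) := by
        refine countUpTo_mono fun n _ hnN ⟨p, hξp, hp, hpN, hn, hs⟩ ↦ ?_
        have hn2 : 2 ≤ n := by exact_mod_cast hεN.trans_lt hn.lt
        have hpsq : p ^ 2 ≤ N := (sq_le_of_pow_four_dvd_s hn2 hs).trans hnN
        have hpfloor : ⌊Real.log N⌋₊ < p := (Nat.floor_lt (Real.log_natCast_nonneg N)).2 hpN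
        exact ⟨p, mem_filter.2 ⟨mem_Ioc.2 ⟨hpfloor, (Nat.le_self_pow two_ne_zero p).trans hpsq⟩,
          hξp, hp, hpsq⟩, hn, hs⟩
    _ ≤ ∑ p ∈ S, 7 * N * (1 / (p : ℝ) ^ (1 + η)) := by
        refine (countUpTo_exists_mem_le _ _).trans (sum_le_sum fun p hp ↦ ?_)
        obtain ⟨hpN, hξp, hp, hpsq⟩ := mem_filter.1 hp
        have hpfloor := (mem_Ioc.1 hpN).1
        exact countUpTo_large_prime_le hp hε.le hξ hξp hpsq
          ((Nat.floor_lt (Real.log_natCast_nonneg N)).1 hpfloor).le (hlog p hpfloor.le) hα.le hαβ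
          hη0 (by linarith) hη1.le hξN hN
    _ = 7 * N * ∑ p ∈ S, 1 / (p : ℝ) ^ (1 + η) := by rw [mul_sum]
    _ ≤ 7 * N * ε := by
        gcongr
        exact htail S fun p hp ↦ (mem_Ioc.1 (mem_filter.1 hp).1).1
    _ = 7 * (ε * N) := by ring

theorem exists_eventually_countUpTo_pow_four_dvd_s_le (hε : 0 < ε) :
    ∃ ξ : ℕ, ∀ᶠ N : ℕ in atTop,
      countUpTo N (fun n ↦ ∃ p > ξ, p.Prime ∧ p ^ 4 ∣ s n) ≤ 15 * (ε * N) := by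
  obtain ⟨α, β, hα, hαβ, htypical⟩ := exists_eventually_countUpTo_not_isTypical_le hε
  obtain ⟨ξ, htypical, hsmall, hξ⟩ := (htypical.and
    ((eventually_countUpTo_small_primes_le hε α β).and (eventually_ge_atTop 2))).exists
  refine ⟨ξ, ?_⟩
  filter_upwards [htypical, eventually_countUpTo_large_primes_le hε hα hαβ hξ]
    with N htypical hlarge
  calc countUpTo N (fun n ↦ ∃ p > ξ, p.Prime ∧ p ^ 4 ∣ s n)
      ≤ countUpTo N (fun n ↦ ¬ IsTypical N ξ α β ε n ∨
          (∃ p > ξ, p.Prime ∧ (p : ℝ) ≤ Real.log N ∧ IsTypical N ξ α β ε n ∧ p ^ 4 ∣ s n) ∨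
          ∃ p > ξ, p.Prime ∧ Real.log N < p ∧ IsTypical N ξ α β ε n ∧ p ^ 4 ∣ s n) := by
        refine countUpTo_mono fun n _ _ ⟨p, hξp, hp, hs⟩ ↦ ?_
        by_cases hn : IsTypical N ξ α β ε n
        · exact .inr ((le_or_gt (p : ℝ) (Real.log N)).imp (⟨p, hξp, hp, ·, hn, hs⟩)
            (⟨p, hξp, hp, ·, hn, hs⟩))
        · exact .inl hn
    _ ≤ 5 * (ε * N) + (3 * (ε * N) + 7 * (ε * N)) :=
        countUpTo_or_le.trans (add_le_add htypical
          (countUpTo_or_le.trans (add_le_add (hsmall N) hlarge)))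
    _ = 15 * (ε * N) := by ring

end Density

theorem s_not_div_by_large_prime_powers_general {f : ℝ → ℝ} (hf : Tendsto f atTop atTop) (k : ℕ)
    (hk : 4 ≤ k) :
    (fun x : ℝ => (((Finset.Icc 1 ⌊x⌋₊).filter
        (fun n => ∃ p : ℕ, p.Prime ∧ f x < ((p ^ k : ℕ) : ℝ) ∧ p ^ k ∣ s n)).card : ℝ))
      =o[atTop] (fun x : ℝ => x) := by
  rw [Asymptotics.isLittleO_iff]
  intro c hc
  obtain ⟨ξ, hξ⟩ := exists_eventually_countUpTo_pow_four_dvd_s_le (show 0 < c / 15 by positivity)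
  filter_upwards [hf.eventually_ge_atTop ((ξ : ℝ) ^ k), tendsto_nat_floor_atTop.eventually hξ,
    eventually_ge_atTop 0] with x hfx hξx hx
  rw [Real.norm_natCast, Real.norm_of_nonneg hx]
  calc _ ≤ countUpTo ⌊x⌋₊ (fun n ↦ ∃ p > ξ, p.Prime ∧ p ^ 4 ∣ s n) := by
        refine countUpTo_mono fun n _ _ ⟨p, hp, hfp, hs⟩ ↦
          ⟨p, lt_of_pow_lt_pow_left₀ k p.zero_le ?_, hp, (pow_dvd_pow p hk).trans hs⟩
        exact_mod_cast hfx.trans_lt hfp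
    _ ≤ 15 * (c / 15 * ⌊x⌋₊) := hξx
    _ = c * ⌊x⌋₊ := by ring
    _ ≤ c * x := by gcongr; exact Nat.floor_le hx

theorem s_not_div_by_large_prime_powers (k : ℕ) (hk : 4 ≤ k) :
    (fun x : ℝ => (((Finset.Icc 1 ⌊x⌋₊).filter
        (fun n => ∃ p : ℕ, p.Prime ∧
          (Real.log (Real.log x)) ^ (0.9 : ℝ) < ((p ^ k : ℕ) : ℝ) ∧ p ^ k ∣ s n)).card : ℝ))
      =o[atTop] (fun x : ℝ => x) :=
  s_not_div_by_large_prime_powers_general ((tendsto_rpow_atTop (by norm_num)).comp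
    (Real.tendsto_log_atTop.comp Real.tendsto_log_atTop)) k hk
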